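/- arXiv:2104.05878 — 2 statements merged into one kernel-verified Lean document; each statement's English description precedes it below -/
import Mathlib

section
/- Let W be an m×k random matrix distributed according to the SUO distribution, let φ : ℝ → ℝ satisfy ‖φ‖_∞ ≤ C and ‖φ'‖_∞ ≤ C, and set n = max(k, m). Suppose δ, ε > 0 satisfy m^{5/2}/(n+1)^2 ≥ log(2/δ) and (n−1)/m^{3/4} ≥ 8√2 C²/ε. Then for all vectors z, z' ∈ ℝ^k with ‖z‖² = ‖z'‖² = k, with probability at least 1 − δ over the draw of W, |κ_f(z, z') − κ̃_f(Σ_{z,z'})| ≤ ε. -/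
open MeasureTheory ProbabilityTheory Matrix Kronecker
open scoped ENNReal NNReal

noncomputable section

instance {m n : Type*} : MeasurableSpace (Matrix m n ℝ) :=
  show MeasurableSpace (m → n → ℝ) from inferInstance

/-- `μ` is the Haar probability measure on the group `O(n)` of `n × n` real orthogonal
matrices: it is a probability measure, it is supported on orthogonal matrices, and it is
invariant under (left) translation by any orthogonal matrix. -/
def IsHaarO (n : ℕ) (μ : Measure (Matrix (Fin n) (Fin n) ℝ)) : Prop :=
  IsProbabilityMeasure μ ∧
  (∀ᵐ M ∂μ, Mᵀ * M = 1) ∧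
  ∀ Q : Matrix (Fin n) (Fin n) ℝ, Qᵀ * Q = 1 → μ.map (fun M => Q * M) = μ

/-- `μ` is the Haar probability measure on `SO(n)`: a probability measure supported on
orthogonal matrices of determinant one, invariant under left translation by `SO(n)`. -/
def IsHaarSO (n : ℕ) (μ : Measure (Matrix (Fin n) (Fin n) ℝ)) : Prop :=
  IsProbabilityMeasure μ ∧
  (∀ᵐ M ∂μ, Mᵀ * M = 1 ∧ M.det = 1) ∧
  ∀ Q : Matrix (Fin n) (Fin n) ℝ, Qᵀ * Q = 1 → Q.det = 1 →
    μ.map (fun M => Q * M) = μ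

/-- The map taking an `n × n` matrix to `√(n/k)` times its top-left `m × k` submatrix. -/
def suoOfHaar {m k n : ℕ} (hm : m ≤ n) (hk : k ≤ n)
    (M : Matrix (Fin n) (Fin n) ℝ) : Matrix (Fin m) (Fin k) ℝ :=
  Real.sqrt ((n : ℝ) / (k : ℝ)) • M.submatrix (Fin.castLE hm) (Fin.castLE hk)

/-- `ν` is the scaled-corrected uniform orthogonal (SUO) distribution on `m × k` matrices:
the law of `√(n/k) • W₀` where `n = max k m` and `W₀` is the top-left `m × k` submatrix of
a Haar-distributed `n × n` orthogonal matrix. -/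
def IsSUO (m k : ℕ) (ν : Measure (Matrix (Fin m) (Fin k) ℝ)) : Prop :=
  ∃ μ : Measure (Matrix (Fin (max k m)) (Fin (max k m)) ℝ),
    IsHaarO (max k m) μ ∧
    ν = μ.map (suoOfHaar (le_max_right k m) (le_max_left k m))

/-- The kernel function `κ_f(z, z') = (1/m) f(z)ᵀ f(z')` of the combined layer
`f(z) = φ(W z)`, with `φ` applied elementwise. -/
def kernelF {m k : ℕ} (φ : ℝ → ℝ) (W : Matrix (Fin m) (Fin k) ℝ)
    (z z' : Fin k → ℝ) : ℝ :=
  (∑ i, φ (W.mulVec z i) * φ (W.mulVec z' i)) / (m : ℝ)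

/-- The input covariance matrix `Σ_{z,z'} = (1/k) [[zᵀz, zᵀz'], [z'ᵀz, z'ᵀz']]`. -/
def covMat {k : ℕ} (z z' : Fin k → ℝ) : Matrix (Fin 2) (Fin 2) ℝ :=
  (k : ℝ)⁻¹ • !![z ⬝ᵥ z, z ⬝ᵥ z'; z' ⬝ᵥ z, z' ⬝ᵥ z']

/-- The approximate kernel function `κ̃_f(Σ) = E_{u ∼ N(0, Σ)}[φ(u₁) φ(u₂)]`, realized by
pushing a pair of independent standard Gaussians through the Cholesky factor of `Σ`. -/
def approxKernel (φ : ℝ → ℝ) (S : Matrix (Fin 2) (Fin 2) ℝ) : ℝ :=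
  ∫ p : ℝ × ℝ,
      φ (Real.sqrt (S 0 0) * p.1) *
      φ ((S 1 0 / Real.sqrt (S 0 0)) * p.1 +
          Real.sqrt (S 1 1 - (S 1 0) ^ 2 / S 0 0) * p.2)
    ∂((gaussianReal 0 1).prod (gaussianReal 0 1))

/-- `γ` is the law of a centered (jointly) Gaussian random vector indexed by `ι` with
covariance matrix `A`: every linear functional of it is a centered real Gaussian with the
corresponding variance. -/
def IsGaussianLaw {ι : Type*} [Fintype ι] (A : Matrix ι ι ℝ)
    (γ : Measure (ι → ℝ)) : Prop :=
  IsProbabilityMeasure γ ∧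
  ∀ l : ι → ℝ,
    γ.map (fun y => ∑ i, l i * y i) =
      gaussianReal 0 (Real.toNNReal (∑ i, ∑ j, l i * A i j * l j))

/-- The Frobenius (Hilbert–Schmidt) norm of a matrix. -/
def frobNorm {m n : ℕ} (M : Matrix (Fin m) (Fin n) ℝ) : ℝ :=
  Real.sqrt (∑ i, ∑ j, (M i j) ^ 2)

/-- The `ℓ²` operator norm of a square matrix. -/
def opNorm {d : ℕ} (A : Matrix (Fin d) (Fin d) ℝ) : ℝ :=
  ‖Matrix.toEuclideanCLM (𝕜 := ℝ) A‖

end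


namespace SUOAux

open Real

lemma exp_sq_density (a : ℝ) (ha : 0 < a) (x : ℝ) :
    gaussianPDFReal 0 1 x • rexp ((1 - (a ^ 2)⁻¹) / 2 * x ^ 2)
      = (√(2 * π))⁻¹ * rexp (-(1 / (2 * a ^ 2)) * x ^ 2) := by
  rw [gaussianPDFReal_def]
  simp only [smul_eq_mul, NNReal.coe_one, mul_one, sub_zero]
  rw [mul_assoc, ← Real.exp_add]
  congr 2
  field_simp
  ring

lemma integral_exp_sq (a : ℝ) (ha : 0 < a) :
    ∫ x, rexp ((1 - (a ^ 2)⁻¹) / 2 * x ^ 2) ∂(gaussianReal 0 1) = a := by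
  rw [integral_gaussianReal_eq_integral_smul one_ne_zero]
  simp_rw [exp_sq_density a ha]
  rw [integral_const_mul, integral_gaussian]
  rw [show π / (1 / (2 * a ^ 2)) = (2 * π) * a ^ 2 by field_simp,
    Real.sqrt_mul (by positivity : (0:ℝ) ≤ 2 * π), Real.sqrt_sq ha.le, inv_mul_cancel_left₀]
  positivity

lemma integral_exp_norm_sq (n : ℕ) (a : ℝ) (ha : 0 < a) :
    ∫ g : EuclideanSpace ℝ (Fin n), rexp ((1 - (a ^ 2)⁻¹) / 2 * ‖g‖ ^ 2)
      ∂(stdGaussian (EuclideanSpace ℝ (Fin n))) = a ^ n := by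
  rw [← map_pi_eq_stdGaussian, integral_map (by fun_prop) (by fun_prop)]
  simp_rw [EuclideanSpace.real_norm_sq_eq, Finset.mul_sum, Real.exp_sum]
  have := integral_fintype_prod_eq_pow (ι := Fin n) (μ := gaussianReal 0 1)
    (fun x : ℝ => rexp ((1 - (a ^ 2)⁻¹) / 2 * x ^ 2))
  rw [integral_exp_sq a ha, Fintype.card_fin] at this
  exact this

lemma chernoff_aux (n : ℕ) (a : ℝ) (ha : 0 < a) :
    rexp (-((1 - (a ^ 2)⁻¹) / 2) * (n * a ^ 2)) * a ^ n ≤ rexp (-(n * (a - 1) ^ 2) / 2) := by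
  have h1 : a ≤ rexp (a - 1) := by have := Real.add_one_le_exp (a - 1); linarith
  calc _ ≤ rexp (-((1 - (a ^ 2)⁻¹) / 2) * (n * a ^ 2)) * (rexp (a - 1)) ^ n := by gcongr
    _ = _ := by
      rw [← Real.exp_nat_mul, ← Real.exp_add]
      congr 1
      field_simp
      ring

lemma norm_tail (n : ℕ) (hn : 0 < n) (x : ℝ) (hx : 0 ≤ x) :
    (stdGaussian (EuclideanSpace ℝ (Fin n))).real {g | x < |‖g‖ - √n|}
      ≤ 2 * rexp (-x ^ 2 / 2) := by
  set γ := stdGaussian (EuclideanSpace ℝ (Fin n))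
  have hn' : (0 : ℝ) < √n := by positivity
  have hnsq : √(n : ℝ) ^ 2 = n := Real.sq_sqrt (by positivity)
  have hint : ∀ a : ℝ, 0 < a → Integrable
      (fun g : EuclideanSpace ℝ (Fin n) => rexp ((1 - (a ^ 2)⁻¹) / 2 * ‖g‖ ^ 2)) γ := by
    intro a ha
    apply Integrable.of_integral_ne_zero
    rw [integral_exp_norm_sq n a ha]
    positivity
  have hup : γ.real {g | √n + x ≤ ‖g‖} ≤ rexp (-x ^ 2 / 2) := by
    set a := 1 + x / √n with ha
    have ha1 : 1 ≤ a := by rw [ha]; have : 0 ≤ x / √n := by positivity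
                           linarith
    have ha0 : 0 < a := by linarith
    have hna : n * a ^ 2 = (√n + x) ^ 2 := by
      rw [ha]; nth_rewrite 1 [← hnsq]; field_simp
    have ht : 0 ≤ (1 - (a ^ 2)⁻¹) / 2 := by
      have : (a ^ 2)⁻¹ ≤ 1 := inv_le_one_of_one_le₀ (by nlinarith)
      linarith
    have := measure_ge_le_exp_mul_mgf (μ := γ) (X := fun g => ‖g‖ ^ 2) (n * a ^ 2) ht (hint a ha0)
    rw [mgf, integral_exp_norm_sq n a ha0] at this
    have h2 := this.trans (chernoff_aux n a ha0)
    have h3 : -(n * (a - 1) ^ 2) / 2 = -x ^ 2 / 2 := by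
      rw [ha]; nth_rewrite 1 [← hnsq]; field_simp; ring
    rw [h3] at h2
    refine le_trans (measureReal_mono ?_) h2
    intro g hg
    simp only [Set.mem_ofPred_eq] at hg ⊢
    rw [hna]; gcongr
  have hlo : γ.real {g | ‖g‖ < √n - x} ≤ rexp (-x ^ 2 / 2) := by
    rcases le_or_gt (√n) x with hc | hc
    · have : {g : EuclideanSpace ℝ (Fin n) | ‖g‖ < √n - x} = ∅ := by
        ext g; simp only [Set.mem_ofPred_eq, Set.mem_empty_iff_false, iff_false, not_lt]
        have := norm_nonneg g; linarith
      rw [this]; simp; positivity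
    set a := 1 - x / √n with ha
    have ha0 : 0 < a := by
      rw [ha]; have : x / √n < 1 := by rw [div_lt_one hn']; exact hc
      linarith
    have ha1 : a ≤ 1 := by rw [ha]; have : 0 ≤ x / √n := by positivity
                           linarith
    have hna : n * a ^ 2 = (√n - x) ^ 2 := by
      rw [ha]; nth_rewrite 1 [← hnsq]; field_simp
    have ht : (1 - (a ^ 2)⁻¹) / 2 ≤ 0 := by
      have : 1 ≤ (a ^ 2)⁻¹ := (one_le_inv₀ (by positivity)).2 (by nlinarith)
      linarith
    have := measure_le_le_exp_mul_mgf (μ := γ) (X := fun g => ‖g‖ ^ 2) (n * a ^ 2) ht (hint a ha0)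
    rw [mgf, integral_exp_norm_sq n a ha0] at this
    have h2 := this.trans (chernoff_aux n a ha0)
    have h3 : -(n * (a - 1) ^ 2) / 2 = -x ^ 2 / 2 := by
      rw [ha]; nth_rewrite 1 [← hnsq]; field_simp; ring
    rw [h3] at h2
    refine le_trans (measureReal_mono ?_) h2
    intro g hg
    simp only [Set.mem_ofPred_eq] at hg ⊢
    rw [hna]; gcongr
  calc _ ≤ γ.real ({g | √n + x ≤ ‖g‖} ∪ {g | ‖g‖ < √n - x}) := by
        refine measureReal_mono ?_
        intro g hg
        simp only [Set.mem_ofPred_eq, Set.mem_union] at hg ⊢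
        rcases lt_abs.1 hg with h | h
        · left; linarith
        · right; linarith
    _ ≤ _ := (measureReal_union_le _ _).trans (by linarith)

lemma map_inner_stdGaussian (n : ℕ) (u : EuclideanSpace ℝ (Fin n)) (hu : ‖u‖ = 1) :
    (stdGaussian (EuclideanSpace ℝ (Fin n))).map (fun h => inner ℝ u h) = gaussianReal 0 1 := by
  have := IsGaussian.map_eq_gaussianReal (μ := stdGaussian (EuclideanSpace ℝ (Fin n)))
    (innerSL ℝ u)
  rw [integral_strongDual_stdGaussian, variance_dual_stdGaussian, innerSL_apply_norm, hu] at this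
  simpa using this

lemma gauss_tail (x : ℝ) (hx : 0 ≤ x) :
    (gaussianReal 0 1).real {y | x < |y|} ≤ 2 * rexp (-x ^ 2 / 2) := by
  have h1 : HasSubgaussianMGF (fun y : ℝ => y) 1 (gaussianReal 0 1) :=
    ⟨fun t => integrable_exp_mul_gaussianReal t, fun t => by
      rw [mgf_fun_id_gaussianReal]; simp⟩
  have h2 := h1.measure_ge_le hx
  have h3 := h1.neg.measure_ge_le hx
  simp only [NNReal.coe_one, mul_one] at h2 h3
  calc _ ≤ (gaussianReal 0 1).real ({y | x ≤ y} ∪ {y | x ≤ (-fun y : ℝ => y) y}) := by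
        refine measureReal_mono ?_
        intro g hg
        simp only [Set.mem_ofPred_eq, Set.mem_union, Pi.neg_apply] at hg ⊢
        rcases lt_abs.1 hg with h | h
        · left; linarith
        · right; linarith
    _ ≤ _ := (measureReal_union_le _ _).trans (by linarith)

lemma inner_tail (n : ℕ) (u : EuclideanSpace ℝ (Fin n)) (hu : ‖u‖ = 1) (x : ℝ) (hx : 0 ≤ x) :
    (stdGaussian (EuclideanSpace ℝ (Fin n))).real {h | x < |inner ℝ u h|}
      ≤ 2 * rexp (-x ^ 2 / 2) := by
  have := gauss_tail x hx
  rw [← map_inner_stdGaussian n u hu, map_measureReal_apply (by fun_prop)] at this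
  · exact this
  · exact measurableSet_lt measurable_const (by fun_prop)

lemma inner_ne_zero (n : ℕ) (u : EuclideanSpace ℝ (Fin n)) (hu : u ≠ 0) :
    ∀ᵐ h ∂(stdGaussian (EuclideanSpace ℝ (Fin n))), inner ℝ u h ≠ 0 := by
  have hu' : ‖u‖ ≠ 0 := norm_ne_zero_iff.2 hu
  have h1 := map_inner_stdGaussian n (‖u‖⁻¹ • u) (by rw [norm_smul]; simp [hu'])
  have h2 : ∀ᵐ y ∂(gaussianReal 0 1), y ≠ 0 := by
    have := nullSingletonClass_gaussianReal (μ := 0) (v := 1) one_ne_zero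
    exact MeasureTheory.Measure.ae_ne _ 0
  rw [← h1] at h2
  have h3 := ae_of_ae_map (by fun_prop) h2
  filter_upwards [h3] with h hh h0
  apply hh
  rw [real_inner_smul_left, h0, mul_zero]

/-- Hoeffding. -/
lemma hoeffding (n m : ℕ) (hmn : m ≤ n) (hm : 0 < m) (F : ℝ × ℝ → ℝ) (hF : Measurable F)
    (K : ℝ) (hK : 0 < K) (hFK : ∀ p, |F p| ≤ K) (t : ℝ) (ht : 0 ≤ t) :
    ((stdGaussian (EuclideanSpace ℝ (Fin n))).prod
      (stdGaussian (EuclideanSpace ℝ (Fin n)))).real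
      {p | K * t / √m < |(∑ i : Fin m, F (p.1 (Fin.castLE hmn i), p.2 (Fin.castLE hmn i))) / m
        - ∫ q, F q ∂((gaussianReal 0 1).prod (gaussianReal 0 1))|}
      ≤ 2 * rexp (-t ^ 2 / 2) := by
  set γ := (gaussianReal 0 1).prod (gaussianReal 0 1)
  set e := ∫ q, F q ∂γ with he
  have hsub1 : HasSubgaussianMGF (fun q => F q - e) ((‖K - -K‖₊ / 2) ^ 2) γ :=
    hasSubgaussianMGF_of_mem_Icc hF.aemeasurable
      (Filter.Eventually.of_forall fun p => by
        have := abs_le.1 (hFK p); exact ⟨this.1, this.2⟩)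
  set c : ℝ≥0 := (‖K - -K‖₊ / 2) ^ 2 with hc
  have hcK : (c : ℝ) = K ^ 2 := by
    rw [hc]; push_cast; rw [Real.norm_eq_abs, sub_neg_eq_add, abs_of_pos (by linarith)]; ring
  have hind : iIndepFun (fun (i : Fin n) (ω : Fin n → ℝ × ℝ) => F (ω i) - e)
      (Measure.pi fun _ => γ) :=
    iIndepFun_pi (X := fun _ q => F q - e) (fun i => (hF.sub_const _).aemeasurable)
  have hsub : ∀ i : Fin n, HasSubgaussianMGF (fun (ω : Fin n → ℝ × ℝ) => F (ω i) - e) c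
      (Measure.pi fun _ => γ) := by
    intro i
    have hmp := measurePreserving_eval (fun _ : Fin n => γ) i
    have h1 : HasSubgaussianMGF (fun q => F q - e) c
      ((Measure.pi fun _ => γ).map (Function.eval i)) := by rw [hmp.map_eq]; exact hsub1
    exact HasSubgaussianMGF.of_map hmp.measurable.aemeasurable h1
  set s : Finset (Fin n) := Finset.univ.map (Fin.castLEEmb hmn) with hs
  have hsum := HasSubgaussianMGF.sum_of_iIndepFun hind (c := fun _ => c) (s := s)
    (fun i _ => hsub i)
  have hm' : (0 : ℝ) < √m := by positivity
  have hmsq : √(m : ℝ) ^ 2 = m := Real.sq_sqrt (by positivity)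
  have ht' : 0 ≤ K * t * √m := by positivity
  have h2 := hsum.measure_ge_le ht'
  have h3 := hsum.neg.measure_ge_le ht'
  have hexp : -(K * t * √m) ^ 2 / (2 * ((∑ i ∈ s, c : ℝ≥0) : ℝ)) = -t ^ 2 / 2 := by
    rw [Finset.sum_const, hs, Finset.card_map, Finset.card_univ, Fintype.card_fin]
    push_cast
    rw [nsmul_eq_mul, hcK, mul_pow, hmsq]
    field_simp
  rw [hexp] at h2 h3
  -- transfer
  have hmp : MeasurePreserving (fun ω : Fin n → ℝ × ℝ =>
      ((WithLp.toLp 2 (fun i => (ω i).1) : EuclideanSpace ℝ (Fin n)),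
        (WithLp.toLp 2 (fun i => (ω i).2) : EuclideanSpace ℝ (Fin n))))
      (Measure.pi fun _ => γ)
      ((stdGaussian (EuclideanSpace ℝ (Fin n))).prod
      (stdGaussian (EuclideanSpace ℝ (Fin n)))) := by
    have ha := measurePreserving_arrowProdEquivProdArrow ℝ ℝ (Fin n)
      (fun _ => gaussianReal 0 1) (fun _ => gaussianReal 0 1)
    have hb : MeasurePreserving (WithLp.toLp 2 : (Fin n → ℝ) → EuclideanSpace ℝ (Fin n))
      (Measure.pi fun _ => gaussianReal 0 1) (stdGaussian (EuclideanSpace ℝ (Fin n))) :=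
      ⟨by fun_prop, map_pi_eq_stdGaussian⟩
    exact (hb.prod hb).comp ha
  rw [← hmp.measureReal_preimage]
  · calc _ ≤ (Measure.pi fun _ : Fin n => γ).real
          ({ω | K * t * √m ≤ ∑ i ∈ s, (F (ω i) - e)} ∪
            {ω | K * t * √m ≤ (-fun ω : Fin n → ℝ × ℝ => ∑ i ∈ s, (F (ω i) - e)) ω}) := by
          refine measureReal_mono ?_
          intro ω hω
          have hsm : ∑ i ∈ s, (F (ω i) - e) =
            m * ((∑ i : Fin m, F (ω (Fin.castLE hmn i))) / m - e) := by
            rw [hs, Finset.sum_map, Finset.sum_sub_distrib]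
            simp
            field_simp
          simp only [Set.mem_ofPred_eq, Set.mem_union, Pi.neg_apply, Set.mem_preimage] at hω ⊢
          rw [hsm]
          have hkt : K * t * √m = m * (K * t / √m) := by
            nth_rewrite 2 [← hmsq]; field_simp
          rw [hkt]
          have hmp : (0 : ℝ) < m := by positivity
          rcases lt_abs.1 hω with h | h
          · left; exact (mul_le_mul_iff_of_pos_left hmp).2 h.le
          · right; rw [← mul_neg]; exact (mul_le_mul_iff_of_pos_left hmp).2 h.le
      _ ≤ _ := (measureReal_union_le _ _).trans (by linarith)
  · refine (measurableSet_lt measurable_const ?_).nullMeasurableSet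
    fun_prop

end SUOAux


namespace SUOAux

open Real

/-- Action of a matrix on Euclidean space. -/
noncomputable def act {n : ℕ} (M : Matrix (Fin n) (Fin n) ℝ) (x : EuclideanSpace ℝ (Fin n)) :
    EuclideanSpace ℝ (Fin n) := WithLp.toLp 2 (M *ᵥ x.ofLp)

lemma measurable_entry {m n : Type*} (i : m) (j : n) :
    Measurable (fun M : Matrix m n ℝ => M i j) :=
  (measurable_pi_apply j).comp (measurable_pi_apply i)

lemma measurable_matrix {α : Type*} [MeasurableSpace α] {m n : Type*} {f : α → Matrix m n ℝ}
    (h : ∀ i j, Measurable fun a => f a i j) : Measurable f :=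
  measurable_pi_lambda _ fun i => measurable_pi_lambda _ fun j => h i j

lemma measurable_act (n : ℕ) :
    Measurable (fun p : Matrix (Fin n) (Fin n) ℝ × EuclideanSpace ℝ (Fin n) => act p.1 p.2) := by
  unfold act
  refine (WithLp.measurable_toLp _ _).comp (measurable_pi_lambda _ fun i => ?_)
  simp only [Matrix.mulVec, dotProduct]
  refine Finset.measurable_sum _ fun j _ => Measurable.mul ?_ ?_
  · exact (measurable_entry i j).comp measurable_fst
  · fun_prop

lemma measurable_mul2 (n : ℕ) :
    Measurable (fun p : Matrix (Fin n) (Fin n) ℝ × Matrix (Fin n) (Fin n) ℝ => p.1ᵀ * p.2) := by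
  refine measurable_matrix fun i j => ?_
  simp only [Matrix.mul_apply, Matrix.transpose_apply]
  refine Finset.measurable_sum _ fun l _ => Measurable.mul ?_ ?_
  · exact (measurable_entry l i).comp measurable_fst
  · exact (measurable_entry l j).comp measurable_snd

lemma measurable_mulLeft (n : ℕ) (Q : Matrix (Fin n) (Fin n) ℝ) :
    Measurable (fun M : Matrix (Fin n) (Fin n) ℝ => Q * M) := by
  have := (measurable_mul2 n).comp (measurable_prodMk_left (x := Qᵀ))
  simpa [Function.comp_def] using this

lemma measurable_mulRight (n : ℕ) (Q : Matrix (Fin n) (Fin n) ℝ) :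
    Measurable (fun M : Matrix (Fin n) (Fin n) ℝ => M * Q) := by
  refine measurable_matrix fun i j => ?_
  simp only [Matrix.mul_apply]
  refine Finset.measurable_sum _ fun l _ => Measurable.mul ?_ measurable_const
  exact measurable_entry i l

lemma measurable_transpose (n : ℕ) :
    Measurable (fun M : Matrix (Fin n) (Fin n) ℝ => Mᵀ) :=
  measurable_matrix fun i j => measurable_entry j i

lemma haar_left {n : ℕ} {μ : Measure (Matrix (Fin n) (Fin n) ℝ)} (hμ : IsHaarO n μ)
    (Q : Matrix (Fin n) (Fin n) ℝ) (hQ : Qᵀ * Q = 1) {B : Set (Matrix (Fin n) (Fin n) ℝ)}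
    (hB : MeasurableSet B) : μ {M | Q * M ∈ B} = μ B := by
  conv_rhs => rw [← hμ.2.2 Q hQ]
  rw [Measure.map_apply (measurable_mulLeft n Q) hB]
  rfl

lemma haar_transpose {n : ℕ} {μ : Measure (Matrix (Fin n) (Fin n) ℝ)} (hμ : IsHaarO n μ)
    {B : Set (Matrix (Fin n) (Fin n) ℝ)}
    (hB : MeasurableSet B) : μ {M | Mᵀ ∈ B} = μ B := by
  have := hμ.1
  have hBt : MeasurableSet {M : Matrix (Fin n) (Fin n) ℝ | Mᵀ ∈ B} := measurable_transpose n hB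
  have hS : MeasurableSet {p : Matrix (Fin n) (Fin n) ℝ × Matrix (Fin n) (Fin n) ℝ |
      p.1ᵀ * p.2 ∈ B} := measurable_mul2 n hB
  have h1 : (μ.prod μ) {p | p.1ᵀ * p.2 ∈ B} = μ B := by
    rw [Measure.prod_apply hS]
    calc _ = ∫⁻ _ : Matrix (Fin n) (Fin n) ℝ, μ B ∂μ := by
          refine lintegral_congr_ae ?_
          filter_upwards [hμ.2.1] with N hN
          exact haar_left hμ Nᵀ (by rw [transpose_transpose]; exact mul_eq_one_comm.1 hN) hB
      _ = _ := by simp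
  have h2 : (μ.prod μ) {p | p.1ᵀ * p.2 ∈ B} = μ {M | Mᵀ ∈ B} := by
    rw [Measure.prod_apply_symm hS]
    calc _ = ∫⁻ _ : Matrix (Fin n) (Fin n) ℝ, μ {M | Mᵀ ∈ B} ∂μ := by
          refine lintegral_congr_ae ?_
          filter_upwards [hμ.2.1] with N hN
          rw [← haar_left hμ Nᵀ (by rw [transpose_transpose]; exact mul_eq_one_comm.1 hN) hBt]
          congr 1
          ext M
          simp [transpose_mul]
      _ = _ := by simp
  rw [← h2, h1]

lemma haar_right {n : ℕ} {μ : Measure (Matrix (Fin n) (Fin n) ℝ)} (hμ : IsHaarO n μ)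
    (Q : Matrix (Fin n) (Fin n) ℝ) (hQ : Qᵀ * Q = 1) {B : Set (Matrix (Fin n) (Fin n) ℝ)}
    (hB : MeasurableSet B) : μ {M | M * Q ∈ B} = μ B := by
  have hBt : MeasurableSet {M : Matrix (Fin n) (Fin n) ℝ | Mᵀ ∈ B} := measurable_transpose n hB
  have hBQ : MeasurableSet {M : Matrix (Fin n) (Fin n) ℝ | M * Q ∈ B} := measurable_mulRight n Q hB
  rw [← haar_transpose hμ hBQ, ← haar_transpose hμ hB,
    ← haar_left hμ Qᵀ (by rw [transpose_transpose]; exact mul_eq_one_comm.1 hQ) hBt]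
  congr 1
  ext M
  simp [transpose_mul]

lemma act_mul {n : ℕ} (M Q : Matrix (Fin n) (Fin n) ℝ) (x : EuclideanSpace ℝ (Fin n)) :
    act (M * Q) x = act M (act Q x) := by
  simp [act, Matrix.mulVec_mulVec]

lemma orth_of_basis {n : ℕ} (a : OrthonormalBasis (Fin n) ℝ (EuclideanSpace ℝ (Fin n))) :
    ∃ Q : Matrix (Fin n) (Fin n) ℝ, Qᵀ * Q = 1 ∧
      ∀ i, act Q (EuclideanSpace.single i 1) = a i := by
  refine ⟨Matrix.of fun i j => a j i, ?_, ?_⟩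
  · ext i j
    have := orthonormal_iff_ite.1 a.orthonormal i j
    simp only [Matrix.mul_apply, transpose_apply, of_apply, Matrix.one_apply]
    rw [← this]
    simp [PiLp.inner_apply, mul_comm]
  · intro i
    ext j
    simp [act]

lemma exists_orth {n : ℕ} (hn : 2 ≤ n) (u v : EuclideanSpace ℝ (Fin n))
    (hu : ‖u‖ = 1) (hv : ‖v‖ = 1) (huv : inner ℝ u v = 0) :
    ∃ Q : Matrix (Fin n) (Fin n) ℝ, Qᵀ * Q = 1 ∧
      act Q (EuclideanSpace.single ⟨0, by omega⟩ 1) = u ∧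
      act Q (EuclideanSpace.single ⟨1, by omega⟩ 1) = v := by
  set i0 : Fin n := ⟨0, by omega⟩
  set i1 : Fin n := ⟨1, by omega⟩
  have h01 : i0 ≠ i1 := by simp [i0, i1]
  have hor : Orthonormal ℝ (Set.domRestrict ({i0, i1} : Set (Fin n))
      (fun i => if i = i0 then u else v)) := by
    rw [orthonormal_iff_ite]
    rintro ⟨i, hi⟩ ⟨j, hj⟩
    have hvu : inner ℝ v u = 0 := by rw [real_inner_comm]; exact huv
    rcases hi with rfl | hi <;> rcases hj with rfl | hj
    · simp [real_inner_self_eq_norm_sq, hu]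
    · obtain rfl : j = i1 := hj
      simp [h01.symm, huv]
      exact fun h => h01 (Subtype.mk.inj h)
    · obtain rfl : i = i1 := hi
      simp [h01.symm, hvu]
      exact fun h => h01 (Subtype.mk.inj h).symm
    · obtain rfl : i = i1 := hi
      obtain rfl : j = i1 := hj
      simp [h01.symm, real_inner_self_eq_norm_sq, hv]
  obtain ⟨b, hb⟩ := hor.exists_orthonormalBasis_extension_of_card_eq (by simp)
  obtain ⟨Q, hQ, hQa⟩ := orth_of_basis b
  refine ⟨Q, hQ, ?_, ?_⟩
  · rw [hQa, hb i0 (by simp)]; simp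
  · rw [hQa, hb i1 (by simp)]; simp [h01.symm]

/-- The law of an orthonormal pair under Haar does not depend on the pair. -/
lemma haar_frame {n : ℕ} (hn : 2 ≤ n) {μ : Measure (Matrix (Fin n) (Fin n) ℝ)} (hμ : IsHaarO n μ)
    (B : Set (EuclideanSpace ℝ (Fin n) × EuclideanSpace ℝ (Fin n))) (hB : MeasurableSet B)
    (u v u' v' : EuclideanSpace ℝ (Fin n))
    (hu : ‖u‖ = 1) (hv : ‖v‖ = 1) (huv : inner ℝ u v = 0)
    (hu' : ‖u'‖ = 1) (hv' : ‖v'‖ = 1) (huv' : inner ℝ u' v' = 0) :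
    μ {M | (act M u, act M v) ∈ B} = μ {M | (act M u', act M v') ∈ B} := by
  obtain ⟨Q, hQ, h1, h2⟩ := exists_orth hn u v hu hv huv
  obtain ⟨Q', hQ', h1', h2'⟩ := exists_orth hn u' v' hu' hv' huv'
  set e0 : EuclideanSpace ℝ (Fin n) := EuclideanSpace.single ⟨0, by omega⟩ 1
  set e1 : EuclideanSpace ℝ (Fin n) := EuclideanSpace.single ⟨1, by omega⟩ 1
  have hS : MeasurableSet {M : Matrix (Fin n) (Fin n) ℝ | (act M e0, act M e1) ∈ B} := by
    refine Measurable.prodMk ?_ ?_ hB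
    · exact (measurable_act n).comp (measurable_prodMk_right (y := e0))
    · exact (measurable_act n).comp (measurable_prodMk_right (y := e1))
  have a1 := haar_right hμ Q hQ hS
  have a2 := haar_right hμ Q' hQ' hS
  simp only [Set.mem_ofPred_eq, act_mul, h1, h2, h1', h2'] at a1 a2
  rw [a1, a2]

/-- Gram-Schmidt -/
noncomputable def gsU {n : ℕ} (g : EuclideanSpace ℝ (Fin n)) : EuclideanSpace ℝ (Fin n) := ‖g‖⁻¹ • g
/-- perpendicular part -/
noncomputable def gsP {n : ℕ} (g h : EuclideanSpace ℝ (Fin n)) : EuclideanSpace ℝ (Fin n) :=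
  h - (inner ℝ (gsU g) h : ℝ) • gsU g
/-- normalized -/
noncomputable def gsV {n : ℕ} (g h : EuclideanSpace ℝ (Fin n)) : EuclideanSpace ℝ (Fin n) :=
  ‖gsP g h‖⁻¹ • gsP g h

lemma measurable_gsU (n : ℕ) : Measurable (gsU (n := n)) := by
  unfold gsU; fun_prop

lemma measurable_gsP (n : ℕ) : Measurable (fun p : EuclideanSpace ℝ (Fin n) ×
    EuclideanSpace ℝ (Fin n) => gsP p.1 p.2) := by
  unfold gsP
  have : Measurable (fun p : EuclideanSpace ℝ (Fin n) × EuclideanSpace ℝ (Fin n) => gsU p.1) :=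
    (measurable_gsU n).comp measurable_fst
  have h1 : Measurable (fun p : EuclideanSpace ℝ (Fin n) × EuclideanSpace ℝ (Fin n) =>
      (inner ℝ (gsU p.1) p.2 : ℝ)) := this.inner measurable_snd
  exact measurable_snd.sub (h1.smul this)

lemma measurable_gsV (n : ℕ) : Measurable (fun p : EuclideanSpace ℝ (Fin n) ×
    EuclideanSpace ℝ (Fin n) => gsV p.1 p.2) := by
  unfold gsV
  exact (measurable_gsP n).norm.inv.smul (measurable_gsP n)

/-- An orthogonal matrix as an isometry. -/
lemma exists_isom {n : ℕ} (M : Matrix (Fin n) (Fin n) ℝ) (hM : Mᵀ * M = 1) :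
    ∃ L : EuclideanSpace ℝ (Fin n) ≃ₗᵢ[ℝ] EuclideanSpace ℝ (Fin n), ∀ x, L x = act M x := by
  let L0 : EuclideanSpace ℝ (Fin n) →ₗᵢ[ℝ] EuclideanSpace ℝ (Fin n) :=
    { toFun := act M
      map_add' := fun x y => by simp [act, Matrix.mulVec_add]
      map_smul' := fun c x => by simp [act, Matrix.mulVec_smul]
      norm_map' := fun x => by
        have : ‖act M x‖ ^ 2 = ‖x‖ ^ 2 := by
          have h0 : ∀ y : EuclideanSpace ℝ (Fin n), ‖y‖ ^ 2 = y.ofLp ⬝ᵥ y.ofLp := fun y => by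
            rw [EuclideanSpace.real_norm_sq_eq]; simp [dotProduct, sq]
          rw [h0, h0]
          simp only [act]
          rw [Matrix.dotProduct_mulVec, Matrix.vecMul_mulVec, hM, Matrix.vecMul_one]
        exact (sq_eq_sq₀ (norm_nonneg _) (norm_nonneg _)).1 this }
  exact ⟨L0.toLinearIsometryEquiv rfl, fun x => rfl⟩

lemma gsU_map {n : ℕ} (L : EuclideanSpace ℝ (Fin n) ≃ₗᵢ[ℝ] EuclideanSpace ℝ (Fin n))
    (g : EuclideanSpace ℝ (Fin n)) : gsU (L g) = L (gsU g) := by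
  simp [gsU]

lemma gsP_map {n : ℕ} (L : EuclideanSpace ℝ (Fin n) ≃ₗᵢ[ℝ] EuclideanSpace ℝ (Fin n))
    (g h : EuclideanSpace ℝ (Fin n)) : gsP (L g) (L h) = L (gsP g h) := by
  simp [gsP, gsU_map]

lemma gsV_map {n : ℕ} (L : EuclideanSpace ℝ (Fin n) ≃ₗᵢ[ℝ] EuclideanSpace ℝ (Fin n))
    (g h : EuclideanSpace ℝ (Fin n)) : gsV (L g) (L h) = L (gsV g h) := by
  simp [gsV, gsP_map]

lemma norm_gsU {n : ℕ} {g : EuclideanSpace ℝ (Fin n)} (hg : g ≠ 0) : ‖gsU g‖ = 1 := by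
  have : ‖g‖ ≠ 0 := norm_ne_zero_iff.2 hg
  simp [gsU, norm_smul, this]

lemma norm_gsV {n : ℕ} {g h : EuclideanSpace ℝ (Fin n)} (hg : gsP g h ≠ 0) : ‖gsV g h‖ = 1 := by
  have : ‖gsP g h‖ ≠ 0 := norm_ne_zero_iff.2 hg
  simp [gsV, norm_smul, this]

lemma inner_gsP {n : ℕ} {g h : EuclideanSpace ℝ (Fin n)} (hg : g ≠ 0) :
    inner ℝ (gsU g) (gsP g h) = 0 := by
  rw [gsP, inner_sub_right, real_inner_smul_right, real_inner_self_eq_norm_sq, norm_gsU hg]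
  ring

lemma inner_gsV {n : ℕ} {g h : EuclideanSpace ℝ (Fin n)} (hg : g ≠ 0) :
    inner ℝ (gsU g) (gsV g h) = 0 := by
  rw [gsV, real_inner_smul_right, inner_gsP hg, mul_zero]

lemma ae_ne_zero {n : ℕ} (hn : 2 ≤ n) :
    ∀ᵐ g ∂(stdGaussian (EuclideanSpace ℝ (Fin n))), g ≠ 0 := by
  have := inner_ne_zero n (EuclideanSpace.single ⟨0, by omega⟩ 1) (by simp)
  filter_upwards [this] with g hg h0
  apply hg; rw [h0, inner_zero_right]

lemma exists_perp {n : ℕ} (hn : 2 ≤ n) (g : EuclideanSpace ℝ (Fin n)) :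
    ∃ w : EuclideanSpace ℝ (Fin n), ‖w‖ = 1 ∧ inner ℝ w g = 0 := by
  have h1 : Module.finrank ℝ (ℝ ∙ g) ≤ 1 := by
    have := finrank_span_le_card (R := ℝ) ({g} : Set (EuclideanSpace ℝ (Fin n)))
    simpa using this
  have h2 := Submodule.finrank_add_finrank_orthogonal (ℝ ∙ g)
  rw [finrank_euclideanSpace_fin] at h2
  have h3 : 0 < Module.finrank ℝ (ℝ ∙ g)ᗮ := by omega
  have : Nontrivial (ℝ ∙ g)ᗮ := Module.finrank_pos_iff.1 h3
  obtain ⟨⟨w, hw⟩, hne⟩ := exists_ne (0 : (ℝ ∙ g)ᗮ)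
  have hw0 : w ≠ 0 := fun h => hne (by ext1; exact h)
  rw [Submodule.mem_orthogonal_singleton_iff_inner_left] at hw
  have : ‖w‖ ≠ 0 := norm_ne_zero_iff.2 hw0
  exact ⟨‖w‖⁻¹ • w, by simp [norm_smul, this], by rw [real_inner_smul_left, hw, mul_zero]⟩

lemma ae_good {n : ℕ} (hn : 2 ≤ n) :
    ∀ᵐ p ∂((stdGaussian (EuclideanSpace ℝ (Fin n))).prod
      (stdGaussian (EuclideanSpace ℝ (Fin n)))), p.1 ≠ 0 ∧ gsP p.1 p.2 ≠ 0 := by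
  have hm : MeasurableSet {p : EuclideanSpace ℝ (Fin n) × EuclideanSpace ℝ (Fin n) |
      p.1 ≠ 0 ∧ gsP p.1 p.2 ≠ 0} := by
    refine MeasurableSet.inter ?_ ?_
    · exact measurable_fst (measurableSet_singleton (0 : EuclideanSpace ℝ (Fin n))).compl
    · exact measurable_gsP n (measurableSet_singleton (0 : EuclideanSpace ℝ (Fin n))).compl
  rw [Measure.ae_prod_iff_ae_ae hm]
  filter_upwards [ae_ne_zero hn] with g hg
  obtain ⟨w, hw, hwg⟩ := exists_perp hn g
  have := inner_ne_zero n w (by rintro rfl; simp at hw)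
  filter_upwards [this] with h hh
  refine ⟨hg, fun h0 => hh ?_⟩
  have : h = (inner ℝ (gsU g) h : ℝ) • gsU g := by
    rw [gsP, sub_eq_zero] at h0; exact h0
  rw [this, real_inner_smul_right]
  simp only [gsU, real_inner_smul_right, hwg, mul_zero]

/-- Transfer between Haar and Gaussian. -/
lemma transfer {n : ℕ} (hn : 2 ≤ n) {μ : Measure (Matrix (Fin n) (Fin n) ℝ)} (hμ : IsHaarO n μ)
    (B : Set (EuclideanSpace ℝ (Fin n) × EuclideanSpace ℝ (Fin n))) (hB : MeasurableSet B)
    (u v : EuclideanSpace ℝ (Fin n))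
    (hu : ‖u‖ = 1) (hv : ‖v‖ = 1) (huv : inner ℝ u v = 0) :
    μ {M | (act M u, act M v) ∈ B} =
      ((stdGaussian (EuclideanSpace ℝ (Fin n))).prod
      (stdGaussian (EuclideanSpace ℝ (Fin n)))) {p | (gsU p.1, gsV p.1 p.2) ∈ B} := by
  have := hμ.1
  set γ := stdGaussian (EuclideanSpace ℝ (Fin n))
  have hS : MeasurableSet {q : Matrix (Fin n) (Fin n) ℝ ×
      (EuclideanSpace ℝ (Fin n) × EuclideanSpace ℝ (Fin n)) |
      (act q.1 (gsU q.2.1), act q.1 (gsV q.2.1 q.2.2)) ∈ B} := by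
    refine Measurable.prodMk ?_ ?_ hB
    · exact (measurable_act n).comp
        (measurable_fst.prodMk ((measurable_gsU n).comp (measurable_fst.comp measurable_snd)))
    · exact (measurable_act n).comp
        (measurable_fst.prodMk ((measurable_gsV n).comp measurable_snd))
  have hS2 : MeasurableSet {p : EuclideanSpace ℝ (Fin n) × EuclideanSpace ℝ (Fin n) |
      (gsU p.1, gsV p.1 p.2) ∈ B} :=
    ((measurable_gsU n).comp measurable_fst).prodMk (measurable_gsV n) hB
  have h1 : (μ.prod (γ.prod γ)) {q | (act q.1 (gsU q.2.1), act q.1 (gsV q.2.1 q.2.2)) ∈ B}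
      = μ {M | (act M u, act M v) ∈ B} := by
    rw [Measure.prod_apply_symm hS]
    calc _ = ∫⁻ _, μ {M | (act M u, act M v) ∈ B} ∂(γ.prod γ) := by
          refine lintegral_congr_ae ?_
          filter_upwards [ae_good hn] with p hp
          exact haar_frame hn hμ B hB _ _ _ _ (norm_gsU hp.1) (norm_gsV hp.2) (inner_gsV hp.1)
            hu hv huv
      _ = _ := by simp
  have h2 : (μ.prod (γ.prod γ)) {q | (act q.1 (gsU q.2.1), act q.1 (gsV q.2.1 q.2.2)) ∈ B}
      = (γ.prod γ) {p | (gsU p.1, gsV p.1 p.2) ∈ B} := by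
    rw [Measure.prod_apply hS]
    calc _ = ∫⁻ _ : Matrix (Fin n) (Fin n) ℝ,
          (γ.prod γ) {p | (gsU p.1, gsV p.1 p.2) ∈ B} ∂μ := by
          refine lintegral_congr_ae ?_
          filter_upwards [hμ.2.1] with M hM
          obtain ⟨L, hL⟩ := exists_isom M hM
          have hLp : MeasurePreserving L γ γ :=
            ⟨L.continuous.measurable, stdGaussian_map L⟩
          rw [← (hLp.prod hLp).measure_preimage hS2.nullMeasurableSet]
          congr 1
          ext p
          simp [← hL, gsU_map, gsV_map]
      _ = _ := by simp
  rw [← h1, h2]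

end SUOAux


namespace SUOAux

open Real

lemma dev_U {n : ℕ} {g : EuclideanSpace ℝ (Fin n)} (hg : g ≠ 0) :
    ‖(√(n : ℝ)) • gsU g - g‖ = |‖g‖ - √n| := by
  have hg' : ‖g‖ ≠ 0 := norm_ne_zero_iff.2 hg
  have h1 : g = ‖g‖ • gsU g := by rw [gsU, smul_smul, mul_inv_cancel₀ hg', one_smul]
  have h2 : (√(n : ℝ)) • gsU g - g = (√(n : ℝ) - ‖g‖) • gsU g := by
    rw [sub_smul, ← h1]
  rw [h2, norm_smul, norm_gsU hg, mul_one, Real.norm_eq_abs, abs_sub_comm]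

lemma dev_V {n : ℕ} {g h : EuclideanSpace ℝ (Fin n)} (hg : g ≠ 0) (hP : gsP g h ≠ 0) :
    ‖(√(n : ℝ)) • gsV g h - h‖ ≤ |‖h‖ - √n| + √2 * |inner ℝ (gsU g) h| := by
  have hP' : ‖gsP g h‖ ≠ 0 := norm_ne_zero_iff.2 hP
  have hV := norm_gsV hP
  have hPV : gsP g h = ‖gsP g h‖ • gsV g h := by
    rw [gsV, smul_smul, mul_inv_cancel₀ hP', one_smul]
  have hdec : h = (inner ℝ (gsU g) h : ℝ) • gsU g + gsP g h := by simp [gsP]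
  set N : ℝ := inner ℝ (gsU g) h with hN
  have hUV : inner ℝ (gsV g h) (gsU g) = 0 := by rw [real_inner_comm]; exact inner_gsV hg
  have hVh : inner ℝ (gsV g h) h = ‖gsP g h‖ := by
    have e1 : inner ℝ (gsV g h) h = inner ℝ (gsV g h) (N • gsU g + gsP g h) :=
      congrArg (fun y => inner ℝ (gsV g h) y) hdec
    have e2 : inner ℝ (gsV g h) (gsP g h) = ‖gsP g h‖ := by
      rw [gsV, real_inner_smul_left, real_inner_self_eq_norm_sq]
      field_simp
    rw [e1, inner_add_right, real_inner_smul_right, hUV, e2]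
    ring
  have hnorm : ‖h‖ ^ 2 = N ^ 2 + ‖gsP g h‖ ^ 2 := by
    conv_lhs => rw [hdec]
    rw [norm_add_sq_real, real_inner_smul_left, inner_gsP hg, norm_smul, norm_gsU hg,
      Real.norm_eq_abs, mul_one, sq_abs]
    ring
  have hle : ‖gsP g h‖ ≤ ‖h‖ := by
    apply le_of_sq_le_sq _ (norm_nonneg _)
    nlinarith [sq_nonneg N]
  have h1 : ‖‖h‖ • gsV g h - h‖ ≤ √2 * |N| := by
    apply le_of_sq_le_sq _ (by positivity)
    rw [norm_sub_sq_real, norm_smul, real_inner_smul_left, hVh, hV, norm_norm, mul_one,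
      mul_pow, sq_abs, Real.sq_sqrt (by norm_num)]
    nlinarith [norm_nonneg (gsP g h), hnorm, hle]
  have h2 : ‖(√(n : ℝ)) • gsV g h - ‖h‖ • gsV g h‖ = |‖h‖ - √n| := by
    rw [← sub_smul, norm_smul, hV, mul_one, Real.norm_eq_abs, abs_sub_comm]
  calc _ = ‖((√(n : ℝ)) • gsV g h - ‖h‖ • gsV g h) + (‖h‖ • gsV g h - h)‖ := by congr 1; abel
    _ ≤ _ := (norm_add_le _ _).trans (by rw [h2]; linarith)

lemma comb_bound (ρ σ : ℝ) (h : ρ ^ 2 + σ ^ 2 = 1) :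
    |ρ| + |σ| * (1 + √2) ≤ 2.6132 := by
  have h2 : √2 ≤ 1.41422 := by rw [Real.sqrt_le_left (by norm_num)]; norm_num
  have h3 : |ρ| + |σ| * (1 + √2) ≤ |ρ| + |σ| * 2.41422 := by gcongr; linarith
  refine h3.trans ?_
  apply le_of_sq_le_sq _ (by norm_num)
  rw [← sq_abs ρ, ← sq_abs σ] at h
  nlinarith [sq_nonneg (|ρ| * 2.41422 - |σ|)]

lemma l1_bound {n m : ℕ} (hmn : m ≤ n) (d : EuclideanSpace ℝ (Fin n)) :
    ∑ i : Fin m, |d (Fin.castLE hmn i)| ≤ √m * ‖d‖ := by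
  apply le_of_sq_le_sq _ (by positivity)
  have h1 := sq_sum_le_card_mul_sum_sq (s := (Finset.univ : Finset (Fin m)))
    (f := fun i => |d (Fin.castLE hmn i)|)
  simp only [sq_abs, Finset.card_univ, Fintype.card_fin] at h1
  rw [mul_pow, Real.sq_sqrt (by positivity)]
  refine h1.trans ?_
  gcongr
  rw [EuclideanSpace.real_norm_sq_eq]
  have h2 : ∑ i : Fin m, d (Fin.castLE hmn i) ^ 2
      = ∑ j ∈ Finset.univ.map (Fin.castLEEmb hmn), d j ^ 2 := by
    rw [Finset.sum_map]; rfl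
  rw [h2]
  exact Finset.sum_le_sum_of_subset_of_nonneg (Finset.subset_univ _) fun _ _ _ => sq_nonneg _

lemma ker_bound {n m : ℕ} (hmn : m ≤ n) (φ : ℝ → ℝ) (C : ℝ) (hφdiff : Differentiable ℝ φ)
    (hφ : ∀ x, |φ x| ≤ C) (hφ' : ∀ x, |deriv φ x| ≤ C)
    (a b a' b' : EuclideanSpace ℝ (Fin n)) :
    |(∑ i : Fin m, φ (a (Fin.castLE hmn i)) * φ (b (Fin.castLE hmn i)))
      - ∑ i : Fin m, φ (a' (Fin.castLE hmn i)) * φ (b' (Fin.castLE hmn i))|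
      ≤ C ^ 2 * (√m * (‖a - a'‖ + ‖b - b'‖)) := by
  have hC : 0 ≤ C := (abs_nonneg _).trans (hφ 0)
  have hlip : ∀ x y, |φ x - φ y| ≤ C * |x - y| := fun x y => by
    have := Convex.norm_image_sub_le_of_norm_deriv_le (f := φ) (s := Set.univ) (x := y) (y := x)
      (fun z _ => hφdiff z) (fun z _ => hφ' z) convex_univ (Set.mem_univ _) (Set.mem_univ _)
    simpa using this
  rw [← Finset.sum_sub_distrib]
  refine (Finset.abs_sum_le_sum_abs _ _).trans ?_
  calc _ ≤ ∑ i : Fin m, (C ^ 2 * |(a - a') (Fin.castLE hmn i)|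
        + C ^ 2 * |(b - b') (Fin.castLE hmn i)|) := by
        refine Finset.sum_le_sum fun i _ => ?_
        set j := Fin.castLE hmn i
        have e : φ (a j) * φ (b j) - φ (a' j) * φ (b' j)
          = (φ (a j) - φ (a' j)) * φ (b j) + φ (a' j) * (φ (b j) - φ (b' j)) := by ring
        rw [e]
        refine (abs_add_le _ _).trans ?_
        rw [abs_mul, abs_mul]
        have t1 : |φ (a j) - φ (a' j)| * |φ (b j)| ≤ (C * |a j - a' j|) * C :=
          mul_le_mul (hlip _ _) (hφ _) (abs_nonneg _) (by positivity)
        have t2 : |φ (a' j)| * |φ (b j) - φ (b' j)| ≤ C * (C * |b j - b' j|) :=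
          mul_le_mul (hφ _) (hlip _ _) (abs_nonneg _) hC
        simp only [PiLp.sub_apply]
        nlinarith
    _ ≤ _ := by
        rw [Finset.sum_add_distrib, ← Finset.mul_sum, ← Finset.mul_sum]
        have h1 := l1_bound hmn (a - a')
        have h2 := l1_bound hmn (b - b')
        have h3 : 0 ≤ C ^ 2 := by positivity
        nlinarith

lemma exists_e2 {n : ℕ} (hn : 2 ≤ n) (e w : EuclideanSpace ℝ (Fin n)) (he : ‖e‖ = 1)
    (hw : ‖w‖ = 1) (ρ : ℝ) (hρ : inner ℝ e w = ρ) :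
    ρ ^ 2 ≤ 1 ∧ ∃ e2 : EuclideanSpace ℝ (Fin n), ‖e2‖ = 1 ∧ inner ℝ e e2 = 0 ∧
      w = ρ • e + √(1 - ρ ^ 2) • e2 := by
  have h1 : ‖w - ρ • e‖ ^ 2 = 1 - ρ ^ 2 := by
    rw [norm_sub_sq_real, real_inner_smul_right, real_inner_comm, hρ, norm_smul, he, hw,
      Real.norm_eq_abs, mul_one, sq_abs]
    ring
  have hle : ρ ^ 2 ≤ 1 := by nlinarith [sq_nonneg ‖w - ρ • e‖]
  have h2 : √(1 - ρ ^ 2) = ‖w - ρ • e‖ := by rw [← h1, Real.sqrt_sq (norm_nonneg _)]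
  refine ⟨hle, ?_⟩
  rw [h2]
  by_cases h0 : w - ρ • e = 0
  · obtain ⟨e2, h3, h4⟩ := exists_perp hn e
    refine ⟨e2, h3, by rw [real_inner_comm]; exact h4, ?_⟩
    rw [h0]; simpa using sub_eq_zero.1 h0
  · have h0' : ‖w - ρ • e‖ ≠ 0 := norm_ne_zero_iff.2 h0
    refine ⟨‖w - ρ • e‖⁻¹ • (w - ρ • e), ?_, ?_, ?_⟩
    · rw [norm_smul, norm_inv, norm_norm, inv_mul_cancel₀ h0']
    · rw [real_inner_smul_right, inner_sub_right, real_inner_smul_right, hρ,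
        real_inner_self_eq_norm_sq, he]
      ring
    · rw [smul_smul, mul_inv_cancel₀ h0', one_smul]; abel

/-- Zero padding. -/
noncomputable def pad {k n : ℕ} (hk : k ≤ n) (z : Fin k → ℝ) : EuclideanSpace ℝ (Fin n) :=
  WithLp.toLp 2 (Function.extend (Fin.castLE hk) z 0)

lemma sum_pad {k n : ℕ} (hk : k ≤ n) (z : Fin k → ℝ) (c : Fin n → ℝ) :
    ∑ j, c j * pad hk z j = ∑ j : Fin k, c (Fin.castLE hk j) * z j := by
  have hinj : Function.Injective (Fin.castLE hk) := Fin.castLE_injective hk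
  symm
  refine Fintype.sum_of_injective (Fin.castLE hk) hinj _ _ ?_ ?_
  · intro i hi
    have : pad hk z i = 0 := by
      simp only [pad]
      rw [Function.extend_apply' _ _ _ (fun ⟨a, ha⟩ => hi ⟨a, ha⟩)]
      rfl
    rw [this, mul_zero]
  · intro i
    have : pad hk z (Fin.castLE hk i) = z i := by
      simp only [pad]
      rw [hinj.extend_apply]
    rw [this]

lemma inner_pad {k n : ℕ} (hk : k ≤ n) (z z' : Fin k → ℝ) :
    inner ℝ (pad hk z) (pad hk z') = z' ⬝ᵥ z := by
  have h := sum_pad hk z' (fun j => pad hk z j)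
  have h2 : ∀ j : Fin k, pad hk z (Fin.castLE hk j) = z j := fun j => by
    simp only [pad]; rw [(Fin.castLE_injective hk).extend_apply]
  simp only [h2] at h
  rw [PiLp.inner_apply]
  simp only [dotProduct, RCLike.inner_apply, conj_trivial]
  simp_rw [mul_comm (pad hk z' _), h, mul_comm]

lemma suo_mulVec {m k n : ℕ} (hm : m ≤ n) (hk : k ≤ n) (M : Matrix (Fin n) (Fin n) ℝ)
    (z : Fin k → ℝ) (i : Fin m) :
    (suoOfHaar hm hk M).mulVec z i = √((n : ℝ) / k) * act M (pad hk z) (Fin.castLE hm i) := by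
  have := sum_pad hk z (fun j => M (Fin.castLE hm i) j)
  simp only [suoOfHaar, act, Matrix.mulVec, dotProduct, Matrix.smul_apply, Matrix.submatrix_apply,
    smul_eq_mul, mul_assoc]
  rw [← Finset.mul_sum, ← this]

lemma inner_tail_prod (n : ℕ) (x : ℝ) (hx : 0 ≤ x) :
    ((stdGaussian (EuclideanSpace ℝ (Fin n))).prod
      (stdGaussian (EuclideanSpace ℝ (Fin n)))).real {p | x < |inner ℝ (gsU p.1) p.2|}
      ≤ 2 * rexp (-x ^ 2 / 2) := by
  have hU : Measurable (fun p : EuclideanSpace ℝ (Fin n) × EuclideanSpace ℝ (Fin n) => gsU p.1) :=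
    (measurable_gsU n).comp measurable_fst
  have hI : Measurable (fun p : EuclideanSpace ℝ (Fin n) × EuclideanSpace ℝ (Fin n) =>
      (inner ℝ (gsU p.1) p.2 : ℝ)) := hU.inner measurable_snd
  have hS : MeasurableSet {p : EuclideanSpace ℝ (Fin n) × EuclideanSpace ℝ (Fin n) |
      x < |inner ℝ (gsU p.1) p.2|} := measurableSet_lt measurable_const (by fun_prop)
  refine ENNReal.toReal_le_of_le_ofReal (by positivity) ?_
  rw [Measure.prod_apply hS]
  calc _ ≤ ∫⁻ _, ENNReal.ofReal (2 * rexp (-x ^ 2 / 2))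
        ∂(stdGaussian (EuclideanSpace ℝ (Fin n))) := by
        refine lintegral_mono fun g => ?_
        by_cases hg : g = 0
        · have : (Prod.mk g ⁻¹' {p : EuclideanSpace ℝ (Fin n) × EuclideanSpace ℝ (Fin n) |
              x < |inner ℝ (gsU p.1) p.2|}) = ∅ := by
            ext h
            simp [hg, gsU, hx]
          rw [this]; simp
        · rw [ENNReal.le_ofReal_iff_toReal_le (measure_ne_top _ _) (by positivity)]
          exact inner_tail n _ (norm_gsU hg) x hx
    _ = _ := by simp

lemma numeric (m n : ℕ) (hm : 0 < m) (C ε x : ℝ) (hε : 0 < ε)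
    (h2 : 8 * Real.sqrt 2 * C ^ 2 / ε ≤ ((n : ℝ) - 1) / (m : ℝ) ^ ((3 : ℝ) / 4))
    (hx : x = √6 * √m * ((m : ℝ) ^ ((3 : ℝ) / 4) / (n + 1))) :
    C ^ 2 * (x + 2.6132 * x) / √m + C ^ 2 * x / √m ≤ ε := by
  have hm' : (0 : ℝ) < √m := by positivity
  set r := (m : ℝ) ^ ((3 : ℝ) / 4) with hr
  have hr0 : 0 < r := by positivity
  have hn1 : (0 : ℝ) < n + 1 := by positivity
  have e1 : C ^ 2 * (x + 2.6132 * x) / √m + C ^ 2 * x / √m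
      = 4.6132 * √6 * (C ^ 2 * r) / (n + 1) := by
    rw [hx]; field_simp; ring
  rw [e1, div_le_iff₀ hn1]
  rw [div_le_div_iff₀ hε hr0] at h2
  have h6 : √6 ≤ 2.4495 := by rw [Real.sqrt_le_left (by norm_num)]; norm_num
  have h22 : 1.4142 ≤ √2 := by apply Real.le_sqrt_of_sq_le; norm_num
  have hCr : 0 ≤ C ^ 2 * r := by positivity
  have t1 : 4.6132 * √6 * (C ^ 2 * r) ≤ 8 * √2 * (C ^ 2 * r) := by
    apply mul_le_mul_of_nonneg_right _ hCr
    linarith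
  nlinarith

/-- Gaussian side of the estimate. -/
lemma gauss_side {n m : ℕ} (hn : 2 ≤ n) (hmn : m ≤ n) (hm : 0 < m) (φ : ℝ → ℝ) (C : ℝ)
    (hC : 0 < C) (hφdiff : Differentiable ℝ φ)
    (hφ : ∀ x, |φ x| ≤ C) (hφ' : ∀ x, |deriv φ x| ≤ C) (ρ σ : ℝ) (hρσ : ρ ^ 2 + σ ^ 2 = 1)
    (x ε : ℝ) (hx : 0 ≤ x)
    (hε : C ^ 2 * (x + 2.6132 * x) / √m + C ^ 2 * x / √m ≤ ε) :
    ((stdGaussian (EuclideanSpace ℝ (Fin n))).prod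
      (stdGaussian (EuclideanSpace ℝ (Fin n)))).real
      {p | (gsU p.1, gsV p.1 p.2) ∈
        {q : EuclideanSpace ℝ (Fin n) × EuclideanSpace ℝ (Fin n) |
          |(∑ i : Fin m, φ (√n * q.1 (Fin.castLE hmn i)) *
            φ (√n * (ρ * q.1 (Fin.castLE hmn i) + σ * q.2 (Fin.castLE hmn i)))) / m
          - ∫ p : ℝ × ℝ, φ p.1 * φ (ρ * p.1 + σ * p.2)
            ∂((gaussianReal 0 1).prod (gaussianReal 0 1))| ≤ ε}}ᶜ ≤ 8 * rexp (-x ^ 2 / 2) := by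
  set γ := stdGaussian (EuclideanSpace ℝ (Fin n)) with hγ
  set κ := ∫ p : ℝ × ℝ, φ p.1 * φ (ρ * p.1 + σ * p.2)
            ∂((gaussianReal 0 1).prod (gaussianReal 0 1)) with hκ
  have hφm : Measurable φ := hφdiff.continuous.measurable
  have hF : Measurable (fun p : ℝ × ℝ => φ p.1 * φ (ρ * p.1 + σ * p.2)) := by fun_prop
  have hm' : (0 : ℝ) < √m := by positivity
  have hmsq : √(m : ℝ) ^ 2 = m := Real.sq_sqrt (by positivity)
  have t1 := norm_tail n (by omega) x hx
  have t2 := inner_tail_prod n x hx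
  have t3 := hoeffding n m hmn hm (fun p : ℝ × ℝ => φ p.1 * φ (ρ * p.1 + σ * p.2)) hF (C ^ 2)
    (by positivity) (fun p => by
      rw [abs_mul, sq]; exact mul_le_mul (hφ _) (hφ _) (abs_nonneg _) hC.le) x hx
  rw [← hγ] at t1 t2 t3
  have hAm : MeasurableSet {g : EuclideanSpace ℝ (Fin n) | x < |‖g‖ - √n|} :=
    measurableSet_lt measurable_const (by fun_prop)
  have t4 : (γ.prod γ).real {p | x < |‖p.1‖ - √n|} ≤ 2 * rexp (-x ^ 2 / 2) := by
    have := (measurePreserving_fst (μ := γ) (ν := γ)).measureReal_preimage hAm.nullMeasurableSet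
    exact this.trans_le t1
  have t5 : (γ.prod γ).real {p | x < |‖p.2‖ - √n|} ≤ 2 * rexp (-x ^ 2 / 2) := by
    have := (measurePreserving_snd (μ := γ) (ν := γ)).measureReal_preimage hAm.nullMeasurableSet
    exact this.trans_le t1
  have t0 : (γ.prod γ).real {p | ¬ (p.1 ≠ 0 ∧ gsP p.1 p.2 ≠ 0)} = 0 := by
    rw [measureReal_eq_zero_iff]
    exact ae_iff.1 (ae_good hn)
  set S0 := {p : EuclideanSpace ℝ (Fin n) × EuclideanSpace ℝ (Fin n) |
    ¬ (p.1 ≠ 0 ∧ gsP p.1 p.2 ≠ 0)} with hS0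
  set S2 := {p : EuclideanSpace ℝ (Fin n) × EuclideanSpace ℝ (Fin n) |
    x < |inner ℝ (gsU p.1) p.2|} with hS2
  set S4 := {p : EuclideanSpace ℝ (Fin n) × EuclideanSpace ℝ (Fin n) |
    x < |‖p.1‖ - √n|} with hS4
  set S5 := {p : EuclideanSpace ℝ (Fin n) × EuclideanSpace ℝ (Fin n) |
    x < |‖p.2‖ - √n|} with hS5
  set S3 := {p : EuclideanSpace ℝ (Fin n) × EuclideanSpace ℝ (Fin n) |
    C ^ 2 * x / √m < |(∑ i : Fin m, φ (p.1 (Fin.castLE hmn i)) *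
      φ (ρ * p.1 (Fin.castLE hmn i) + σ * p.2 (Fin.castLE hmn i))) / m - κ|} with hS3
  have key : {p : EuclideanSpace ℝ (Fin n) × EuclideanSpace ℝ (Fin n) |
      (gsU p.1, gsV p.1 p.2) ∈
        {q : EuclideanSpace ℝ (Fin n) × EuclideanSpace ℝ (Fin n) |
          |(∑ i : Fin m, φ (√n * q.1 (Fin.castLE hmn i)) *
            φ (√n * (ρ * q.1 (Fin.castLE hmn i) + σ * q.2 (Fin.castLE hmn i)))) / m
          - κ| ≤ ε}}ᶜ ⊆ S0 ∪ (S2 ∪ (S3 ∪ (S4 ∪ S5))) := by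
    intro p hp
    by_contra hcon
    simp only [Set.mem_union, not_or] at hcon
    obtain ⟨c0, c2, c3, c4, c5⟩ := hcon
    simp only [hS0, hS2, hS3, hS4, hS5, Set.mem_ofPred_eq, not_lt, not_not] at c0 c2 c3 c4 c5
    apply hp
    simp only [Set.mem_ofPred_eq]
    obtain ⟨g, h⟩ := p
    simp only at c0 c2 c3 c4 c5 ⊢
    have kb := ker_bound hmn φ C hφdiff hφ hφ' ((√(n : ℝ)) • gsU g)
      ((√(n : ℝ)) • (ρ • gsU g + σ • gsV g h)) g (ρ • g + σ • h)
    have b1 : ‖(√(n : ℝ)) • gsU g - g‖ ≤ x := by rw [dev_U c0.1]; exact c4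
    have b2 : ‖(√(n : ℝ)) • gsV g h - h‖ ≤ (1 + √2) * x := by
      refine (dev_V c0.1 c0.2).trans ?_
      have : √2 * |inner ℝ (gsU g) h| ≤ √2 * x := by gcongr
      linarith
    have b3 : ‖(√(n : ℝ)) • (ρ • gsU g + σ • gsV g h) - (ρ • g + σ • h)‖ ≤ 2.6132 * x := by
      have e : (√(n : ℝ)) • (ρ • gsU g + σ • gsV g h) - (ρ • g + σ • h)
          = ρ • ((√(n : ℝ)) • gsU g - g) + σ • ((√(n : ℝ)) • gsV g h - h) := by module
      rw [e]
      refine (norm_add_le _ _).trans ?_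
      rw [norm_smul, norm_smul, Real.norm_eq_abs, Real.norm_eq_abs]
      have u1 : |ρ| * ‖(√(n : ℝ)) • gsU g - g‖ ≤ |ρ| * x := by gcongr
      have u2 : |σ| * ‖(√(n : ℝ)) • gsV g h - h‖ ≤ |σ| * ((1 + √2) * x) := by gcongr
      have u3 := mul_le_mul_of_nonneg_right (comb_bound ρ σ hρσ) hx
      linarith
    simp only [PiLp.smul_apply, PiLp.add_apply, smul_eq_mul] at kb
    set A := ∑ i : Fin m, φ (√n * (gsU g) (Fin.castLE hmn i)) *
            φ (√n * (ρ * (gsU g) (Fin.castLE hmn i) + σ * (gsV g h) (Fin.castLE hmn i)))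
    set A' := ∑ i : Fin m, φ (g (Fin.castLE hmn i)) *
      φ (ρ * g (Fin.castLE hmn i) + σ * h (Fin.castLE hmn i))
    have hd : |A / m - A' / m| ≤ C ^ 2 * (x + 2.6132 * x) / √m := by
      rw [← sub_div, abs_div, abs_of_pos (by positivity : (0 : ℝ) < m)]
      have hb : |A - A'| ≤ C ^ 2 * (√m * (x + 2.6132 * x)) := kb.trans (by gcongr)
      calc _ ≤ C ^ 2 * (√m * (x + 2.6132 * x)) / m := by gcongr
        _ = _ := by
          nth_rewrite 2 [← hmsq]
          field_simp
    calc |A / m - κ| = |(A / m - A' / m) + (A' / m - κ)| := by congr 1; ring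
      _ ≤ |A / m - A' / m| + |A' / m - κ| := abs_add_le _ _
      _ ≤ ε := by linarith
  refine (measureReal_mono key).trans ?_
  have q1 := measureReal_union_le (μ := γ.prod γ) S0 (S2 ∪ (S3 ∪ (S4 ∪ S5)))
  have q2 := measureReal_union_le (μ := γ.prod γ) S2 (S3 ∪ (S4 ∪ S5))
  have q3 := measureReal_union_le (μ := γ.prod γ) S3 (S4 ∪ S5)
  have q4 := measureReal_union_le (μ := γ.prod γ) S4 S5
  linarith

end SUOAux


namespace SUOAux
open Real

lemma act_add {n : ℕ} (M : Matrix (Fin n) (Fin n) ℝ) (x y : EuclideanSpace ℝ (Fin n)) :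
    act M (x + y) = act M x + act M y := by
  ext i; simp [act, Matrix.mulVec_add]

lemma act_smul {n : ℕ} (M : Matrix (Fin n) (Fin n) ℝ) (c : ℝ) (x : EuclideanSpace ℝ (Fin n)) :
    act M (c • x) = c • act M x := by
  ext i; simp [act, Matrix.mulVec_smul]

lemma measurable_suo {m k n : ℕ} (hm : m ≤ n) (hk : k ≤ n) :
    Measurable (suoOfHaar (m := m) (k := k) hm hk) := by
  refine measurable_matrix fun i j => ?_
  simp only [suoOfHaar, Matrix.smul_apply, Matrix.submatrix_apply, smul_eq_mul]
  exact (measurable_entry _ _).const_mul _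

lemma measurable_kernelF {m k : ℕ} (φ : ℝ → ℝ) (hφ : Measurable φ) (z z' : Fin k → ℝ) :
    Measurable (fun W : Matrix (Fin m) (Fin k) ℝ => kernelF φ W z z') := by
  have hv : ∀ (y : Fin k → ℝ) (i : Fin m),
      Measurable (fun W : Matrix (Fin m) (Fin k) ℝ => W.mulVec y i) := fun y i => by
    simp only [Matrix.mulVec, dotProduct]
    exact Finset.measurable_sum _ fun j _ => (measurable_entry i j).mul_const _
  unfold kernelF
  refine Measurable.div_const (Finset.measurable_sum _ fun i _ => ?_) _
  exact (hφ.comp (hv z i)).mul (hφ.comp (hv z' i))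

lemma delta_bound (m n : ℕ) (hm : 0 < m) (δ x : ℝ) (hδ : 0 < δ) (hδ1 : δ < 1)
    (h1 : Real.log (2 / δ) ≤ (m : ℝ) ^ ((5 : ℝ) / 2) / ((n : ℝ) + 1) ^ 2)
    (hx : x = √6 * √m * ((m : ℝ) ^ ((3 : ℝ) / 4) / (n + 1))) :
    8 * rexp (-x ^ 2 / 2) ≤ δ := by
  have hm0 : (0 : ℝ) < m := by positivity
  set s := (m : ℝ) ^ ((5 : ℝ) / 2) / ((n : ℝ) + 1) ^ 2 with hs
  have e0 : (m : ℝ) * ((m : ℝ) ^ ((3 : ℝ) / 4)) ^ 2 = (m : ℝ) ^ ((5 : ℝ) / 2) := by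
    rw [← Real.rpow_natCast, ← Real.rpow_mul hm0.le]
    nth_rewrite 1 [← Real.rpow_one (m : ℝ)]
    rw [← Real.rpow_add hm0]
    norm_num
  have e1 : x ^ 2 = 6 * s := by
    rw [hx, hs, ← e0, mul_pow, mul_pow, Real.sq_sqrt (by norm_num), Real.sq_sqrt hm0.le, div_pow]
    ring
  have e2 : rexp (-x ^ 2 / 2) = rexp (-s) ^ 3 := by
    rw [← Real.exp_nat_mul, e1]; congr 1; push_cast; ring
  have e3 : 2 / δ ≤ rexp s := (Real.log_le_iff_le_exp (by positivity)).1 h1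
  have e4 : rexp (-s) ≤ δ / 2 := by
    rw [Real.exp_neg]
    have := inv_anti₀ (by positivity) e3
    rwa [inv_div] at this
  have e5 : 0 < rexp (-s) := Real.exp_pos _
  rw [e2]
  calc 8 * rexp (-s) ^ 3 ≤ 8 * (δ / 2) ^ 3 := by gcongr
    _ = δ * (δ * δ) := by ring
    _ ≤ δ := by nlinarith [mul_pos hδ hδ]

lemma main_pos (m k n : ℕ) (hm : 0 < m) (hk : 0 < k) (hmn : m ≤ n) (hkn : k ≤ n)
    (μ : Measure (Matrix (Fin n) (Fin n) ℝ)) (hμ : IsHaarO n μ) (hn : 2 ≤ n)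
    (φ : ℝ → ℝ) (C : ℝ) (hC : 0 < C) (hφdiff : Differentiable ℝ φ)
    (hφ : ∀ x, |φ x| ≤ C) (hφ' : ∀ x, |deriv φ x| ≤ C)
    (δ ε : ℝ) (hδ : 0 < δ) (hδ1 : δ < 1) (hε : 0 < ε)
    (h1 : Real.log (2 / δ) ≤ (m : ℝ) ^ ((5 : ℝ) / 2) / ((n : ℝ) + 1) ^ 2)
    (h2 : 8 * Real.sqrt 2 * C ^ 2 / ε ≤ ((n : ℝ) - 1) / (m : ℝ) ^ ((3 : ℝ) / 4))
    (z z' : Fin k → ℝ) (hz : z ⬝ᵥ z = (k : ℝ)) (hz' : z' ⬝ᵥ z' = (k : ℝ)) :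
    ENNReal.ofReal (1 - δ) ≤
      μ {M | |kernelF φ (suoOfHaar hmn hkn M) z z' - approxKernel φ (covMat z z')| ≤ ε} := by
  have hk0 : (0 : ℝ) < k := by positivity
  have hsk : (0 : ℝ) < √k := by positivity
  have hsk2 : √(k : ℝ) * √k = k := Real.mul_self_sqrt hk0.le
  have hsk' : √(k : ℝ) ≠ 0 := hsk.ne'
  set e := (√(k : ℝ))⁻¹ • pad hkn z with he
  set w := (√(k : ℝ))⁻¹ • pad hkn z' with hw
  set ρ : ℝ := (k : ℝ)⁻¹ * (z' ⬝ᵥ z) with hρ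
  have hin : ∀ a b : Fin k → ℝ, inner ℝ ((√(k : ℝ))⁻¹ • pad hkn a) ((√(k : ℝ))⁻¹ • pad hkn b)
      = (k : ℝ)⁻¹ * (b ⬝ᵥ a) := fun a b => by
    rw [real_inner_smul_left, real_inner_smul_right, inner_pad, ← mul_assoc, ← mul_inv, hsk2]
  have hnorm : ∀ a : Fin k → ℝ, a ⬝ᵥ a = k → ‖(√(k : ℝ))⁻¹ • pad hkn a‖ = 1 := fun a ha => by
    have := hin a a
    rw [real_inner_self_eq_norm_sq, ha, inv_mul_cancel₀ hk0.ne'] at this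
    exact (pow_eq_one_iff_of_nonneg (norm_nonneg _) two_ne_zero).1 this
  have hne : ‖e‖ = 1 := hnorm z hz
  have hnw : ‖w‖ = 1 := hnorm z' hz'
  obtain ⟨hρ1, e2, hne2, hee2, hwe⟩ := exists_e2 hn e w hne hnw ρ (hin z z')
  set σ := √(1 - ρ ^ 2) with hσ
  have hρσ : ρ ^ 2 + σ ^ 2 = 1 := by rw [hσ, Real.sq_sqrt (by linarith)]; ring
  have hpz : pad hkn z = √(k : ℝ) • e := by rw [he, smul_smul, mul_inv_cancel₀ hsk', one_smul]
  have hpz' : pad hkn z' = √(k : ℝ) • w := by rw [hw, smul_smul, mul_inv_cancel₀ hsk', one_smul]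
  clear_value e w
  have hsn : √((n : ℝ) / k) * √k = √n := by
    rw [Real.sqrt_div (by positivity)]; field_simp
  have hker : ∀ M, kernelF φ (suoOfHaar hmn hkn M) z z'
      = (∑ i : Fin m, φ (√n * (act M e) (Fin.castLE hmn i)) *
            φ (√n * (ρ * (act M e) (Fin.castLE hmn i) + σ * (act M e2) (Fin.castLE hmn i)))) / m := by
    intro M
    unfold kernelF
    congr 1
    refine Finset.sum_congr rfl fun i _ => ?_
    rw [suo_mulVec, suo_mulVec, hpz, hpz', act_smul M _ e, act_smul M _ w, hwe, act_add,
      act_smul, act_smul]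
    simp only [PiLp.smul_apply, PiLp.add_apply, smul_eq_mul]
    rw [← mul_assoc, ← mul_assoc, hsn]
  have hap : approxKernel φ (covMat z z') = ∫ p : ℝ × ℝ, φ p.1 * φ (ρ * p.1 + σ * p.2)
            ∂((gaussianReal 0 1).prod (gaussianReal 0 1)) := by
    have c0 : covMat z z' 0 0 = 1 := by simp [covMat, hz, hk0.ne']
    have c1 : covMat z z' 1 0 = ρ := by simp [covMat, hρ]
    have c2 : covMat z z' 1 1 = 1 := by simp [covMat, hz', hk0.ne']
    unfold approxKernel
    rw [c0, c1, c2]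
    simp only [Real.sqrt_one, one_mul, div_one, ← hσ]
  set x := √6 * √m * ((m : ℝ) ^ ((3 : ℝ) / 4) / (n + 1)) with hx
  have hx0 : 0 ≤ x := by positivity
  have G := gauss_side hn hmn hm φ C hC hφdiff hφ hφ' ρ σ hρσ x ε hx0
    (numeric m n hm C ε x hε h2 hx)
  set κ := ∫ p : ℝ × ℝ, φ p.1 * φ (ρ * p.1 + σ * p.2)
            ∂((gaussianReal 0 1).prod (gaussianReal 0 1)) with hκ
  set B := {q : EuclideanSpace ℝ (Fin n) × EuclideanSpace ℝ (Fin n) |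
          |(∑ i : Fin m, φ (√n * q.1 (Fin.castLE hmn i)) *
            φ (√n * (ρ * q.1 (Fin.castLE hmn i) + σ * q.2 (Fin.castLE hmn i)))) / m
          - κ| ≤ ε} with hBdef
  have hφm : Measurable φ := hφdiff.continuous.measurable
  have hB : MeasurableSet B := measurableSet_le (by fun_prop) measurable_const
  have T := transfer hn hμ B hB e e2 hne hne2 hee2
  have hset : {M | |kernelF φ (suoOfHaar hmn hkn M) z z' - approxKernel φ (covMat z z')| ≤ ε}
      = {M | (act M e, act M e2) ∈ B} := by
    ext M
    simp only [Set.mem_ofPred_eq, hBdef, hker M, hap]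
  rw [hset, T]
  have hm2 : MeasurableSet {p : EuclideanSpace ℝ (Fin n) × EuclideanSpace ℝ (Fin n) |
      (gsU p.1, gsV p.1 p.2) ∈ B} :=
    ((measurable_gsU n).comp measurable_fst).prodMk (measurable_gsV n) hB
  have D := delta_bound m n hm δ x hδ hδ1 h1 hx
  rw [probReal_compl_eq_one_sub hm2] at G
  refine ENNReal.ofReal_le_of_le_toReal ?_
  change _ ≤ Measure.real _ _
  linarith

end SUOAux

/-- **Theorem (main result).** If `W` is SUO-distributed, `φ` and its derivative are
bounded by `C`, and `m^{5/2}/(n+1)² ≥ log(2/δ)` and `(n-1)/m^{3/4} ≥ 8√2 C²/ε` with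
`n = max k m`, then for all inputs `z, z'` with `‖z‖² = ‖z'‖² = k`, with probability at
least `1 - δ` we have `|κ_f(z,z') - κ̃_f(Σ_{z,z'})| ≤ ε`. -/
theorem suo_kernel_approx (m k : ℕ) (hm : 0 < m) (hk : 0 < k)
    (ν : Measure (Matrix (Fin m) (Fin k) ℝ)) (hν : IsSUO m k ν)
    (φ : ℝ → ℝ) (C : ℝ) (hφdiff : Differentiable ℝ φ)
    (hφ : ∀ x, |φ x| ≤ C) (hφ' : ∀ x, |deriv φ x| ≤ C)
    (δ ε : ℝ) (hδ : 0 < δ) (hε : 0 < ε)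
    (h1 : Real.log (2 / δ) ≤ (m : ℝ) ^ ((5 : ℝ) / 2) / (((max k m : ℕ) : ℝ) + 1) ^ 2)
    (h2 : 8 * Real.sqrt 2 * C ^ 2 / ε ≤
      (((max k m : ℕ) : ℝ) - 1) / (m : ℝ) ^ ((3 : ℝ) / 4)) :
    ∀ z z' : Fin k → ℝ, z ⬝ᵥ z = (k : ℝ) → z' ⬝ᵥ z' = (k : ℝ) →
      ENNReal.ofReal (1 - δ) ≤
        ν {W | |kernelF φ W z z' - approxKernel φ (covMat z z')| ≤ ε} := by
  intro z z' hz hz'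
  obtain ⟨μ, hμ, rfl⟩ := hν
  have hφm : Measurable φ := hφdiff.continuous.measurable
  have hS : MeasurableSet {W : Matrix (Fin m) (Fin k) ℝ |
      |kernelF φ W z z' - approxKernel φ (covMat z z')| ≤ ε} := by
    refine measurableSet_le ?_ measurable_const
    exact measurable_abs.comp ((SUOAux.measurable_kernelF φ hφm z z').sub_const _)
  rw [Measure.map_apply (SUOAux.measurable_suo _ _) hS]
  rcases le_or_gt 1 δ with hδ1 | hδ1
  · rw [ENNReal.ofReal_of_nonpos (by linarith)]
    exact zero_le
  have hC0 : 0 ≤ C := (abs_nonneg _).trans (hφ 0)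
  rcases hC0.eq_or_lt with hC | hC
  · have hz0 : ∀ x, φ x = 0 := fun x => abs_nonpos_iff.1 ((hφ x).trans hC.symm.le)
    have hu : {W : Matrix (Fin m) (Fin k) ℝ |
      |kernelF φ W z z' - approxKernel φ (covMat z z')| ≤ ε} = Set.univ := by
      ext W
      simp [kernelF, approxKernel, hz0, hε.le]
    have := hμ.1
    rw [hu, Set.preimage_univ, measure_univ]
    exact ENNReal.ofReal_le_one.2 (by linarith)
  have hn : 2 ≤ max k m := by
    by_contra hcon
    have hle : ((max k m : ℕ) : ℝ) ≤ 1 := by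
      have : max k m ≤ 1 := by omega
      exact_mod_cast this
    have hpos : 0 < 8 * Real.sqrt 2 * C ^ 2 / ε := by positivity
    have hneg : (((max k m : ℕ) : ℝ) - 1) / (m : ℝ) ^ ((3 : ℝ) / 4) ≤ 0 :=
      div_nonpos_of_nonpos_of_nonneg (by linarith) (by positivity)
    linarith
  exact SUOAux.main_pos m k (max k m) hm hk (le_max_right k m) (le_max_left k m) μ hμ hn φ C hC
    hφdiff hφ hφ' δ ε hδ hδ1 hε h1 h2 z z' hz hz'
end

section
/- Let W be an m×k random matrix whose entries are drawn i.i.d. from N(0, 1/k), and let φ : ℝ → ℝ be twice continuously differentiable with E_{x∼N(0,1)}[φ(x)²] = 1 and ‖φ‖_∞, ‖φ'‖_∞, ‖φ''‖_∞ ≤ C. Suppose m ≥ 4 C⁴ log(8/δ)/ε². Then for all vectors z, z' ∈ ℝ^k with ‖z‖² = ‖z'‖² = k, with probability at least 1 − δ over the draw of W, |κ_f(z, z') − κ̃_f(Σ_{z,z'})| ≤ ε. -/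
open MeasureTheory ProbabilityTheory Matrix Kronecker
open scoped ENNReal NNReal

theorem hoeff_one {E : Type*} [MeasurableSpace E] (γ : Measure E) [IsProbabilityMeasure γ]
    (m : ℕ) (hm : 0 < m) (g : E → ℝ) (hg : Measurable g) (B : ℝ) (hB : 0 < B)
    (hgB : ∀ x, |g x| ≤ B) (ε : ℝ) (hε : 0 < ε) :
    (Measure.pi fun _ : Fin m => γ).real {W | ε ≤ (∑ i, g (W i)) / (m : ℝ) - ∫ x, g x ∂γ} ≤
      Real.exp (-((m : ℝ) * ε ^ 2 / (2 * B ^ 2))) := by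
  have hm' : (0 : ℝ) < m := by exact_mod_cast hm
  have hsub : HasSubgaussianMGF (fun x => g x - ∫ x, g x ∂γ) ((‖B - -B‖₊ / 2) ^ 2) γ :=
    hasSubgaussianMGF_of_mem_Icc hg.aemeasurable
      (Filter.Eventually.of_forall fun x => abs_le.mp (hgB x))
  have hind : iIndepFun (fun (i : Fin m) (W : Fin m → E) => g (W i) - ∫ x, g x ∂γ)
      (Measure.pi fun _ : Fin m => γ) :=
    iIndepFun_pi (μ := fun _ : Fin m => γ) (X := fun _ x => g x - ∫ x, g x ∂γ)
      (fun i => (hg.sub_const _).aemeasurable)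
  have hs : ∀ i : Fin m, HasSubgaussianMGF (fun W : Fin m → E => g (W i) - ∫ x, g x ∂γ)
      ((‖B - -B‖₊ / 2) ^ 2) (Measure.pi fun _ : Fin m => γ) := by
    intro i
    have hmp := measurePreserving_eval (fun _ : Fin m => γ) i
    refine HasSubgaussianMGF.of_map (X := fun x => g x - ∫ x, g x ∂γ)
      (Y := fun W : Fin m → E => W i) hmp.measurable.aemeasurable ?_
    rw [show (fun W : Fin m → E => W i) = Function.eval i from rfl, hmp.map_eq]
    exact hsub
  have key := HasSubgaussianMGF.measure_sum_ge_le_of_iIndepFun hind (s := Finset.univ)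
    (fun i _ => hs i) (ε := m * ε) (by positivity)
  have hset : {W : Fin m → E | ε ≤ (∑ i, g (W i)) / (m : ℝ) - ∫ x, g x ∂γ} =
      {W : Fin m → E | m * ε ≤ ∑ i, (g (W i) - ∫ x, g x ∂γ)} := by
    ext W
    simp only [Set.mem_setOf_eq, Finset.sum_sub_distrib, Finset.sum_const, Finset.card_univ,
      Fintype.card_fin, nsmul_eq_mul]
    rw [le_sub_iff_add_le, le_div_iff₀ hm', le_sub_iff_add_le]
    constructor <;> intro h <;> linarith
  rw [hset]
  refine key.trans (le_of_eq ?_)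
  congr 1
  have hn : ‖B + B‖ = 2 * B := by rw [Real.norm_of_nonneg (by positivity)]; ring
  simp only [sub_neg_eq_add, Finset.sum_const, Finset.card_univ, Fintype.card_fin, nsmul_eq_mul]
  push_cast
  rw [hn]
  field_simp

theorem hoeff_two {E : Type*} [MeasurableSpace E] (γ : Measure E) [IsProbabilityMeasure γ]
    (m : ℕ) (hm : 0 < m) (g : E → ℝ) (hg : Measurable g) (B : ℝ) (hB : 0 < B)
    (hgB : ∀ x, |g x| ≤ B) (ε : ℝ) (hε : 0 < ε) (δ : ℝ) (hδ : 0 < δ)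
    (hm4 : 4 * B ^ 2 * Real.log (8 / δ) / ε ^ 2 ≤ (m : ℝ)) :
    ENNReal.ofReal (1 - δ) ≤ (Measure.pi fun _ : Fin m => γ)
      {W | |(∑ i, g (W i)) / (m : ℝ) - ∫ x, g x ∂γ| ≤ ε} := by
  rcases le_or_gt 1 δ with h1 | h1
  · rw [ENNReal.ofReal_of_nonpos (by linarith)]; simp
  set P := Measure.pi fun _ : Fin m => γ with hP
  have hA := hoeff_one γ m hm g hg B hB hgB ε hε
  have hA' := hoeff_one γ m hm (fun x => - g x) hg.neg B hB (by simpa using hgB) ε hε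
  have hb : Real.exp (-((m : ℝ) * ε ^ 2 / (2 * B ^ 2))) ≤ δ / 2 := by
    have hlog : 0 ≤ Real.log (8 / δ) :=
      Real.log_nonneg (by rw [le_div_iff₀ hδ]; linarith)
    have h2 : Real.log (8 / δ) ≤ (m : ℝ) * ε ^ 2 / (2 * B ^ 2) := by
      rw [div_le_iff₀ (by positivity)] at hm4
      rw [le_div_iff₀ (by positivity)]
      nlinarith [mul_nonneg (sq_nonneg B) hlog]
    calc Real.exp (-((m : ℝ) * ε ^ 2 / (2 * B ^ 2))) ≤ Real.exp (- Real.log (8 / δ)) :=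
          Real.exp_le_exp.mpr (by linarith)
      _ = δ / 8 := by
          rw [← Real.log_inv, Real.exp_log (by positivity), inv_div]
      _ ≤ δ / 2 := by linarith
  set S := {W : Fin m → E | |(∑ i, g (W i)) / (m : ℝ) - ∫ x, g x ∂γ| ≤ ε} with hS
  have hSm : MeasurableSet S := by
    apply measurableSet_le _ measurable_const
    have : Measurable fun W : Fin m → E => (∑ i, g (W i)) / (m : ℝ) - ∫ x, g x ∂γ := by
      fun_prop
    exact this.abs
  have hcompl : P.real Sᶜ ≤ δ := by
    have hsub : Sᶜ ⊆ {W : Fin m → E | ε ≤ (∑ i, g (W i)) / (m : ℝ) - ∫ x, g x ∂γ} ∪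
        {W : Fin m → E | ε ≤ (∑ i, - g (W i)) / (m : ℝ) - ∫ x, - g x ∂γ} := by
      intro W hW
      simp only [hS, Set.mem_compl_iff, Set.mem_setOf_eq, not_le] at hW
      simp only [Set.mem_union, Set.mem_setOf_eq, Finset.sum_neg_distrib, integral_neg, neg_div]
      rcases lt_abs.mp hW with h | h
      · left; linarith
      · right; linarith
    have := (measureReal_mono (μ := P) hsub).trans (measureReal_union_le _ _)
    linarith
  have hc := probReal_compl_eq_one_sub (μ := P) hSm
  rw [← ofReal_measureReal]
  exact ENNReal.ofReal_le_ofReal (by linarith)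

theorem law_eq (k : ℕ) (hk : 0 < k) (z z' : Fin k → ℝ) (hz : z ⬝ᵥ z = (k : ℝ))
    (hz' : z' ⬝ᵥ z' = (k : ℝ)) (ρ : ℝ) (hρ : ρ = (z' ⬝ᵥ z) / k) :
    (Measure.pi fun _ : Fin k => gaussianReal 0 ((k : ℝ≥0))⁻¹).map
      (fun w => (w ⬝ᵥ z, w ⬝ᵥ z')) =
    ((gaussianReal 0 1).prod (gaussianReal 0 1)).map
      (fun p : ℝ × ℝ => (p.1, ρ * p.1 + Real.sqrt (1 - ρ ^ 2) * p.2)) := by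
  have hk' : (0 : ℝ) < k := by exact_mod_cast hk
  have hρ1 : ρ ^ 2 ≤ 1 := by
    have := Finset.sum_mul_sq_le_sq_mul_sq Finset.univ z' z
    simp only [dotProduct] at hz hz' hρ
    simp only [pow_two (z _), pow_two (z' _), hz, hz'] at this
    rw [hρ, div_pow, div_le_one (by positivity)]
    linarith
  have hm1 : Measurable (fun w : Fin k → ℝ => (w ⬝ᵥ z, w ⬝ᵥ z')) := by
    unfold dotProduct; fun_prop
  have hm2 : Measurable (fun p : ℝ × ℝ => (p.1, ρ * p.1 + Real.sqrt (1 - ρ ^ 2) * p.2)) := by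
    fun_prop
  have := Measure.isProbabilityMeasure_map (μ := Measure.pi fun _ : Fin k => gaussianReal 0 ((k : ℝ≥0))⁻¹) hm1.aemeasurable
  have := Measure.isProbabilityMeasure_map (μ := (gaussianReal 0 1).prod (gaussianReal 0 1)) hm2.aemeasurable
  apply Measure.ext_of_charFunDual
  ext L
  set a := L (1, 0) with ha
  set b := L (0, 1) with hb
  have hL : ∀ x y : ℝ, L (x, y) = x * a + y * b := by
    intro x y
    have : ((x, y) : ℝ × ℝ) = x • (1, 0) + y • (0, 1) := by simp
    rw [this, map_add, map_smul, map_smul, smul_eq_mul, smul_eq_mul]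
  have hLm : Measurable L := L.continuous.measurable
  rw [charFunDual_apply, charFunDual_apply, integral_map hm1.aemeasurable (by fun_prop),
    integral_map hm2.aemeasurable (by fun_prop)]
  have e1 : ∀ w : Fin k → ℝ, Complex.exp (L (w ⬝ᵥ z, w ⬝ᵥ z') * Complex.I) =
      ∏ j, Complex.exp (((a * z j + b * z' j : ℝ) : ℂ) * (w j : ℂ) * Complex.I) := by
    intro w
    rw [← Complex.exp_sum, hL, ← Finset.sum_mul]
    congr 2
    rw [dotProduct, dotProduct, Finset.sum_mul, Finset.sum_mul, ← Finset.sum_add_distrib]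
    push_cast
    refine Finset.sum_congr rfl fun j _ => ?_
    ring
  have e2 : ∀ p : ℝ × ℝ,
      Complex.exp (L (p.1, ρ * p.1 + Real.sqrt (1 - ρ ^ 2) * p.2) * Complex.I) =
      Complex.exp (((a + b * ρ : ℝ) : ℂ) * (p.1 : ℂ) * Complex.I) *
      Complex.exp (((b * Real.sqrt (1 - ρ ^ 2) : ℝ) : ℂ) * (p.2 : ℂ) * Complex.I) := by
    intro p
    rw [← Complex.exp_add, hL]
    congr 1
    push_cast
    ring
  simp_rw [e1, e2]
  rw [integral_prod_mul (fun x : ℝ => Complex.exp (((a + b * ρ : ℝ) : ℂ) * (x : ℂ) * Complex.I))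
    (fun x : ℝ => Complex.exp (((b * Real.sqrt (1 - ρ ^ 2) : ℝ) : ℂ) * (x : ℂ) * Complex.I)),
    integral_fintype_prod_eq_prod
      (f := fun j (x : ℝ) => Complex.exp (((a * z j + b * z' j : ℝ) : ℂ) * (x : ℂ) * Complex.I))]
  simp_rw [← charFun_apply_real, charFun_gaussianReal]
  rw [← Complex.exp_sum, ← Complex.exp_add]
  congr 1
  have hq : ∑ j, (k : ℝ)⁻¹ * (a * z j + b * z' j) ^ 2 / 2 =
      ((a + b * ρ) ^ 2 + (b * Real.sqrt (1 - ρ ^ 2)) ^ 2) / 2 := by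
    rw [mul_pow b, Real.sq_sqrt (by linarith)]
    have : ∑ j, (k : ℝ)⁻¹ * (a * z j + b * z' j) ^ 2 / 2 =
        (k : ℝ)⁻¹ / 2 * (a ^ 2 * (z ⬝ᵥ z) + 2 * a * b * (z' ⬝ᵥ z) + b ^ 2 * (z' ⬝ᵥ z')) := by
      simp only [dotProduct, Finset.mul_sum, ← Finset.sum_add_distrib]
      refine Finset.sum_congr rfl fun j _ => ?_
      ring
    rw [this, hz, hz', hρ]
    field_simp
    ring
  have hq' := congrArg (fun r : ℝ => ((-r : ℝ) : ℂ)) hq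
  simp only [← Finset.sum_neg_distrib] at hq'
  push_cast at hq' ⊢
  simp only [mul_zero, zero_mul, zero_sub]
  rw [hq']
  ring

/-- **Theorem (Daniely et al., adapted).** If the entries of `W` are i.i.d. `N(0, 1/k)`,
`φ` is twice continuously differentiable with `E_{N(0,1)}[φ²] = 1` and
`‖φ‖_∞, ‖φ'‖_∞, ‖φ''‖_∞ ≤ C`, and `m ≥ 4C⁴ log(8/δ)/ε²`, then for all inputs `z, z'`
with `‖z‖² = ‖z'‖² = k`, with probability at least `1 - δ` we have
`|κ_f(z,z') - κ̃_f(Σ_{z,z'})| ≤ ε`. -/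
theorem gaussian_kernel_approx (m k : ℕ) (hm : 0 < m) (hk : 0 < k)
    (ν : Measure (Matrix (Fin m) (Fin k) ℝ))
    (hν : ν = Measure.pi fun _ : Fin m => Measure.pi fun _ : Fin k =>
      gaussianReal 0 ((k : ℝ≥0))⁻¹)
    (φ : ℝ → ℝ) (C : ℝ) (hφC2 : ContDiff ℝ 2 φ)
    (hnorm : ∫ x, (φ x) ^ 2 ∂(gaussianReal 0 1) = 1)
    (hφ : ∀ x, |φ x| ≤ C) (hφ' : ∀ x, |deriv φ x| ≤ C)
    (hφ'' : ∀ x, |deriv (deriv φ) x| ≤ C)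
    (δ ε : ℝ) (hδ : 0 < δ) (hε : 0 < ε)
    (hm4 : 4 * C ^ 4 * Real.log (8 / δ) / ε ^ 2 ≤ (m : ℝ)) :
    ∀ z z' : Fin k → ℝ, z ⬝ᵥ z = (k : ℝ) → z' ⬝ᵥ z' = (k : ℝ) →
      ENNReal.ofReal (1 - δ) ≤
        ν {W | |kernelF φ W z z' - approxKernel φ (covMat z z')| ≤ ε} := by
  intro z z' hz hz'
  have hk' : (0 : ℝ) < k := by exact_mod_cast hk
  have hC : 0 < C := by
    have h0 : 0 ≤ C := (abs_nonneg _).trans (hφ 0)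
    rcases h0.lt_or_eq with h | h
    · exact h
    · exfalso
      have : ∀ x, φ x = 0 := fun x => abs_nonpos_iff.mp (h ▸ hφ x)
      simp [this] at hnorm
  have hφm : Measurable φ := hφC2.continuous.measurable
  set γ := Measure.pi fun _ : Fin k => gaussianReal 0 ((k : ℝ≥0))⁻¹ with hγ
  have hmd : ∀ y : Fin k → ℝ, Measurable fun w : Fin k → ℝ => w ⬝ᵥ y := by
    intro y; unfold dotProduct; fun_prop
  have hS00 : covMat z z' 0 0 = 1 := by
    simp [covMat, hz, hk'.ne']
  have hS11 : covMat z z' 1 1 = 1 := by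
    simp [covMat, hz', hk'.ne']
  have hS10 : covMat z z' 1 0 = (z' ⬝ᵥ z) / k := by
    simp [covMat, div_eq_inv_mul]
  have hmean : approxKernel φ (covMat z z') = ∫ w, φ (w ⬝ᵥ z) * φ (w ⬝ᵥ z') ∂γ := by
    have hlaw := law_eq k hk z z' hz hz' _ rfl
    have hf : Measurable fun q : ℝ × ℝ => φ q.1 * φ q.2 := by fun_prop
    have h1 := integral_map (μ := γ) (φ := fun w => (w ⬝ᵥ z, w ⬝ᵥ z'))
      ((hmd z).prodMk (hmd z')).aemeasurable
      (f := fun q : ℝ × ℝ => φ q.1 * φ q.2) hf.aestronglyMeasurable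
    rw [hlaw, integral_map (by fun_prop) hf.aestronglyMeasurable] at h1
    rw [← h1]
    simp only [approxKernel, hS00, hS11, hS10, Real.sqrt_one, one_mul, div_one]
  have := hoeff_two γ m hm (fun w => φ (w ⬝ᵥ z) * φ (w ⬝ᵥ z'))
    ((hφm.comp (hmd z)).mul (hφm.comp (hmd z'))) (C ^ 2) (by positivity)
    (fun w => by
      rw [abs_mul, pow_two]
      exact mul_le_mul (hφ _) (hφ _) (abs_nonneg _) hC.le) ε hε δ hδ
    (by rw [← pow_mul]; exact hm4)
  rw [hν, hmean]
  exact this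
end
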